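/- Let D be a strictly convex planar domain whose boundary is parametrized by a smooth ℓ-periodic curve γ: ℝ → ℝ², injective on [0,ℓ), positively oriented, with ω(γ'(t),γ''(t)) > 0 for all t. Suppose the symplectic billiard in D is without conjugate points, i.e. for every symplectic billiard configuration (tₙ)_{n∈ℤ} and every Jacobi field (ξₙ)_{n∈ℤ} along it that is not identically zero, there do not exist indices M < N with ξ_M = 0 and ξ_N = 0. Then the image of γ is an ellipse, i.e. the image of the unit circle under an invertible affine transformation of ℝ². -/

import Mathlib

open Set

/-- The standard area form on ℝ². -/
noncomputable def om (u v : ℝ × ℝ) : ℝ := u.1 * v.2 - v.1 * u.2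

/-- L₁₁(t₁,t₂) = ω(γ''(t₁), γ(t₂)). -/
noncomputable def L11 (γ : ℝ → ℝ × ℝ) (t₁ t₂ : ℝ) : ℝ := om (deriv (deriv γ) t₁) (γ t₂)

/-- L₂₂(t₁,t₂) = ω(γ(t₁), γ''(t₂)). -/
noncomputable def L22 (γ : ℝ → ℝ × ℝ) (t₁ t₂ : ℝ) : ℝ := om (γ t₁) (deriv (deriv γ) t₂)

/-- L₁₂(t₁,t₂) = ω(γ'(t₁), γ'(t₂)). -/
noncomputable def L12 (γ : ℝ → ℝ × ℝ) (t₁ t₂ : ℝ) : ℝ := om (deriv γ t₁) (deriv γ t₂)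

/-- A symplectic billiard configuration: the phase-space condition and the reflection law. -/
def IsConfiguration (γ : ℝ → ℝ × ℝ) (t : ℤ → ℝ) : Prop :=
  (∀ n : ℤ, 0 < om (deriv γ (t n)) (deriv γ (t (n + 1)))) ∧
  (∀ n : ℤ, om (deriv γ (t n)) (γ (t (n + 1)) - γ (t (n - 1))) = 0)

/-- A Jacobi field along a configuration. -/
def IsJacobiField (γ : ℝ → ℝ × ℝ) (t : ℤ → ℝ) (ξ : ℤ → ℝ) : Prop :=
  ∀ n : ℤ, L12 γ (t (n - 1)) (t n) * ξ (n - 1)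
    + (L22 γ (t (n - 1)) (t n) + L11 γ (t n) (t (n + 1))) * ξ n
    + L12 γ (t n) (t (n + 1)) * ξ (n + 1) = 0

/-- The unit circle in ℝ². -/
def unitCircle : Set (ℝ × ℝ) := {p : ℝ × ℝ | p.1 ^ 2 + p.2 ^ 2 = 1}


namespace SB
open Real Filter Topology

/-- A closed strictly convex curve parametrized by its tangent angle. -/
structure AC (ρ X Y : ℝ → ℝ) : Prop where
  pos : ∀ φ, 0 < ρ φ
  diff : Differentiable ℝ ρ
  per : ∀ φ, ρ (φ + 2 * π) = ρ φ
  dX : ∀ φ, HasDerivAt X (ρ φ * cos φ) φ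
  dY : ∀ φ, HasDerivAt Y (ρ φ * sin φ) φ
  pX : ∀ φ, X (φ + 2 * π) = X φ
  pY : ∀ φ, Y (φ + 2 * π) = Y φ

/-- height of the point `ψ` in the frame at `φ` -/
noncomputable def ht (X Y : ℝ → ℝ) (φ ψ : ℝ) : ℝ := cos φ * Y ψ - sin φ * X ψ
/-- length coordinate of the point `ψ` in the frame at `φ` -/
noncomputable def lg (X Y : ℝ → ℝ) (φ ψ : ℝ) : ℝ := cos φ * X ψ + sin φ * Y ψ

/-- clamp to `[0,π]` -/
noncomputable def cl (u : ℝ) : ℝ := max 0 (min u π)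

lemma cl_mem (u : ℝ) : cl u ∈ Icc 0 π :=
  ⟨le_max_left _ _, max_le pi_pos.le (min_le_right _ _)⟩
lemma cl_eq {u : ℝ} (h : u ∈ Icc 0 π) : cl u = u := by
  unfold cl; rw [min_eq_left h.2, max_eq_right h.1]
lemma cl_cont : Continuous cl := by unfold cl; fun_prop

namespace AC
variable {ρ X Y : ℝ → ℝ}

lemma contX (h : AC ρ X Y) : Continuous X :=
  continuous_iff_continuousAt.2 fun φ => (h.dX φ).continuousAt
lemma contY (h : AC ρ X Y) : Continuous Y :=
  continuous_iff_continuousAt.2 fun φ => (h.dY φ).continuousAt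
lemma contρ (h : AC ρ X Y) : Continuous ρ := h.diff.continuous

lemma ht_deriv (h : AC ρ X Y) (φ ψ : ℝ) : HasDerivAt (ht X Y φ) (ρ ψ * sin (ψ - φ)) ψ := by
  have := ((h.dY ψ).const_mul (cos φ)).sub ((h.dX ψ).const_mul (sin φ))
  refine this.congr_deriv ?_
  rw [sin_sub]; ring

lemma lg_deriv (h : AC ρ X Y) (φ ψ : ℝ) : HasDerivAt (lg X Y φ) (ρ ψ * cos (ψ - φ)) ψ := by
  have := ((h.dX ψ).const_mul (cos φ)).add ((h.dY ψ).const_mul (sin φ))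
  refine this.congr_deriv ?_
  rw [cos_sub]; ring

lemma ht_cont (h : AC ρ X Y) : Continuous (fun p : ℝ × ℝ => ht X Y p.1 p.2) := by
  have := h.contX; have := h.contY
  unfold ht; fun_prop
lemma lg_cont (h : AC ρ X Y) : Continuous (fun p : ℝ × ℝ => lg X Y p.1 p.2) := by
  have := h.contX; have := h.contY
  unfold lg; fun_prop

lemma ht_per (h : AC ρ X Y) (φ ψ : ℝ) : ht X Y φ (ψ + 2 * π) = ht X Y φ ψ := by
  simp [ht, h.pX, h.pY]
lemma ht_per_left (φ ψ : ℝ) : ht X Y (φ + 2 * π) ψ = ht X Y φ ψ := by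
  simp [ht]
lemma lg_per (h : AC ρ X Y) (φ ψ : ℝ) : lg X Y φ (ψ + 2 * π) = lg X Y φ ψ := by
  simp [lg, h.pX, h.pY]
lemma lg_per_left (φ ψ : ℝ) : lg X Y (φ + 2 * π) ψ = lg X Y φ ψ := by
  simp [lg]

lemma hd_right (h : AC ρ X Y) (φ v : ℝ) :
    HasDerivAt (fun v => ht X Y φ (φ + v)) (ρ (φ + v) * sin v) v := by
  have := (h.ht_deriv φ (φ + v)).comp_const_add φ v
  refine this.congr_deriv ?_
  ring_nf
lemma hd_left (h : AC ρ X Y) (φ v : ℝ) :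
    HasDerivAt (fun v => ht X Y φ (φ - v)) (ρ (φ - v) * sin v) v := by
  have := (h.ht_deriv φ (φ - v)).comp_const_sub φ v
  refine this.congr_deriv ?_
  rw [show φ - v - φ = -v by ring, sin_neg]; ring

lemma mono_right (h : AC ρ X Y) (φ : ℝ) : StrictMonoOn (fun v => ht X Y φ (φ + v)) (Icc 0 π) := by
  apply strictMonoOn_of_deriv_pos (convex_Icc _ _)
  · exact fun v _ => (h.hd_right φ v).continuousAt.continuousWithinAt
  · intro v hv
    rw [interior_Icc] at hv
    rw [(h.hd_right φ v).deriv]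
    exact mul_pos (h.pos _) (sin_pos_of_mem_Ioo hv)
lemma mono_left (h : AC ρ X Y) (φ : ℝ) : StrictMonoOn (fun v => ht X Y φ (φ - v)) (Icc 0 π) := by
  apply strictMonoOn_of_deriv_pos (convex_Icc _ _)
  · exact fun v _ => (h.hd_left φ v).continuousAt.continuousWithinAt
  · intro v hv
    rw [interior_Icc] at hv
    rw [(h.hd_left φ v).deriv]
    exact mul_pos (h.pos _) (sin_pos_of_mem_Ioo hv)

lemma ht_pi (h : AC ρ X Y) (φ : ℝ) : ht X Y φ (φ + π) = ht X Y φ (φ - π) := by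
  rw [← h.ht_per φ (φ - π)]; congr 1; ring

/-- bijectivity between right and left arcs -/
lemma ex_right (h : AC ρ X Y) (φ : ℝ) {u : ℝ} (hu : u ∈ Icc 0 π) :
    ∃ v ∈ Icc 0 π, ht X Y φ (φ + v) = ht X Y φ (φ - u) := by
  have hc : ContinuousOn (fun v => ht X Y φ (φ + v)) (Icc 0 π) :=
    fun v _ => (h.hd_right φ v).continuousAt.continuousWithinAt
  have := intermediate_value_Icc pi_pos.le hc
  obtain ⟨v, hv, e⟩ := this (a := ht X Y φ (φ - u)) (by
    constructor
    · have := (h.mono_left φ).monotoneOn (left_mem_Icc.2 pi_pos.le) hu hu.1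
      simpa using this
    · have := (h.mono_left φ).monotoneOn hu (right_mem_Icc.2 pi_pos.le) hu.2
      rw [h.ht_pi]; exact this)
  exact ⟨v, hv, e⟩
lemma ex_left (h : AC ρ X Y) (φ : ℝ) {v : ℝ} (hv : v ∈ Icc 0 π) :
    ∃ u ∈ Icc 0 π, ht X Y φ (φ + v) = ht X Y φ (φ - u) := by
  have hc : ContinuousOn (fun v => ht X Y φ (φ - v)) (Icc 0 π) :=
    fun v _ => (h.hd_left φ v).continuousAt.continuousWithinAt
  have := intermediate_value_Icc pi_pos.le hc
  obtain ⟨u, hu, e⟩ := this (a := ht X Y φ (φ + v)) (by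
    constructor
    · have := (h.mono_right φ).monotoneOn (left_mem_Icc.2 pi_pos.le) hv hv.1
      simpa using this
    · have := (h.mono_right φ).monotoneOn hv (right_mem_Icc.2 pi_pos.le) hv.2
      rw [← h.ht_pi]; exact this)
  exact ⟨u, hu, e.symm⟩

end AC

lemma cont_of_graph (W : ℝ × ℝ → ℝ) (S : Set ((ℝ × ℝ) × ℝ)) (hclosed : IsClosed S)
    (hspec : ∀ q, (q, W q) ∈ S) (huniq : ∀ q v, v ∈ Icc 0 π → (q, v) ∈ S → v = W q)
    (hmem : ∀ q, W q ∈ Icc 0 π) : Continuous W := by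
  rw [continuous_iff_continuousAt]
  intro p
  have hK : IsCompact (Icc (0:ℝ) π) := isCompact_Icc
  apply hK.tendsto_nhds_of_unique_mapClusterPt (Eventually.of_forall hmem)
  intro v hv hcl
  apply huniq p v hv
  have hmc : MapClusterPt (p, v) (𝓝 p) (fun q : ℝ × ℝ => (q, W q)) := by
    have := (mapClusterPt_iff_frequently.1 hcl)
    rw [mapClusterPt_iff_frequently]
    intro s hs
    obtain ⟨a, ha, b, hb, hab⟩ := mem_nhds_prod_iff.1 hs
    refine ((this b hb).and_eventually ha).mono fun q hq => hab ⟨hq.2, hq.1⟩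
  have hfin : ClusterPt (p, v) (𝓟 S) := by
    refine ClusterPt.mono hmc ?_
    rw [le_principal_iff, mem_map]
    exact Eventually.of_forall hspec
  exact isClosed_iff_clusterPt.1 hclosed (p, v) hfin

open Classical in
/-- the angle increment of the billiard map -/
noncomputable def V (X Y : ℝ → ℝ) (φ u : ℝ) : ℝ :=
  if h : ∃ v ∈ Icc 0 π, ht X Y φ (φ + v) = ht X Y φ (φ - cl u) then h.choose else 0

namespace AC
variable {ρ X Y : ℝ → ℝ}

lemma V_mem (h : AC ρ X Y) (φ u : ℝ) : V X Y φ u ∈ Icc 0 π := by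
  have := h.ex_right φ (cl_mem u)
  unfold V; rw [dif_pos this]; exact this.choose_spec.1
lemma V_spec' (h : AC ρ X Y) (φ u : ℝ) : ht X Y φ (φ + V X Y φ u) = ht X Y φ (φ - cl u) := by
  have := h.ex_right φ (cl_mem u)
  unfold V; rw [dif_pos this]; exact this.choose_spec.2
lemma V_spec (h : AC ρ X Y) (φ : ℝ) {u : ℝ} (hu : u ∈ Icc 0 π) :
    ht X Y φ (φ + V X Y φ u) = ht X Y φ (φ - u) := by
  rw [h.V_spec', cl_eq hu]
lemma V_uniq (h : AC ρ X Y) (φ u : ℝ) {v : ℝ} (hv : v ∈ Icc 0 π)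
    (e : ht X Y φ (φ + v) = ht X Y φ (φ - cl u)) : V X Y φ u = v :=
  (h.mono_right φ).injOn (h.V_mem φ u) hv (by simpa using (h.V_spec' φ u).trans e.symm)

lemma V_zero (h : AC ρ X Y) (φ : ℝ) : V X Y φ 0 = 0 := by
  apply h.V_uniq _ _ (left_mem_Icc.2 pi_pos.le)
  rw [cl_eq (left_mem_Icc.2 pi_pos.le)]; simp
lemma V_pi (h : AC ρ X Y) (φ : ℝ) : V X Y φ π = π := by
  apply h.V_uniq _ _ (right_mem_Icc.2 pi_pos.le)
  rw [cl_eq (right_mem_Icc.2 pi_pos.le)]; exact h.ht_pi φ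

lemma V_Ioo (h : AC ρ X Y) (φ : ℝ) {u : ℝ} (hu : u ∈ Ioo 0 π) : V X Y φ u ∈ Ioo 0 π := by
  have h1 := h.V_spec φ (Ioo_subset_Icc_self hu)
  have hm := h.V_mem φ u
  refine ⟨lt_of_le_of_ne hm.1 fun e => ?_, lt_of_le_of_ne hm.2 fun e => ?_⟩
  · rw [← e] at h1
    have := (h.mono_left φ) (left_mem_Icc.2 pi_pos.le) (Ioo_subset_Icc_self hu) hu.1
    simp at this h1; linarith
  · rw [e, h.ht_pi] at h1
    have := (h.mono_left φ) (Ioo_subset_Icc_self hu) (right_mem_Icc.2 pi_pos.le) hu.2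
    simp only at this; linarith

lemma V_surj (h : AC ρ X Y) (φ : ℝ) {v : ℝ} (hv : v ∈ Ioo 0 π) :
    ∃ u ∈ Ioo 0 π, V X Y φ u = v := by
  obtain ⟨u, hu, e⟩ := h.ex_left φ (Ioo_subset_Icc_self hv)
  have e2 : V X Y φ u = v := h.V_uniq φ u (Ioo_subset_Icc_self hv) (by rw [cl_eq hu]; exact e)
  refine ⟨u, ⟨lt_of_le_of_ne hu.1 fun e => ?_, lt_of_le_of_ne hu.2 fun e => ?_⟩, e2⟩
  · rw [← e, h.V_zero] at e2; exact hv.1.ne e2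
  · rw [e, h.V_pi] at e2; exact hv.2.ne e2.symm

lemma V_cont (h : AC ρ X Y) : Continuous (fun p : ℝ × ℝ => V X Y p.1 p.2) := by
  have hX := h.contX
  have hY := h.contY
  have hclc := cl_cont
  have hclosed : IsClosed {q : (ℝ × ℝ) × ℝ |
      ht X Y q.1.1 (q.1.1 + q.2) = ht X Y q.1.1 (q.1.1 - cl q.1.2)} := by
    apply isClosed_eq
    · unfold ht; fun_prop
    · unfold ht; fun_prop
  have hspec : ∀ q : ℝ × ℝ, (q, V X Y q.1 q.2) ∈ {q : (ℝ × ℝ) × ℝ |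
      ht X Y q.1.1 (q.1.1 + q.2) = ht X Y q.1.1 (q.1.1 - cl q.1.2)} :=
    fun q => h.V_spec' q.1 q.2
  have huniq : ∀ (q : ℝ × ℝ) (v : ℝ), v ∈ Icc 0 π → (q, v) ∈ {q : (ℝ × ℝ) × ℝ |
      ht X Y q.1.1 (q.1.1 + q.2) = ht X Y q.1.1 (q.1.1 - cl q.1.2)} → v = V X Y q.1 q.2 :=
    fun q v hv e => (h.V_uniq q.1 q.2 hv e).symm
  have hmem : ∀ q : ℝ × ℝ, V X Y q.1 q.2 ∈ Icc 0 π := fun q => h.V_mem q.1 q.2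
  exact cont_of_graph _ _ hclosed hspec huniq hmem

end AC
end SB


namespace SB
open Real Filter Topology MeasureTheory

lemma swap_cont {F : ℝ → ℝ → ℝ} (hF : Continuous (Function.uncurry F)) (a b c d : ℝ) :
    ∫ x in a..b, ∫ y in c..d, F x y = ∫ y in c..d, ∫ x in a..b, F x y := by
  apply intervalIntegral_intervalIntegral_swap
  exact (hF.continuousOn.integrableOn_compact
    (isCompact_uIcc.prod isCompact_uIcc)).mono_set
      (prod_mono uIoc_subset_uIcc uIoc_subset_uIcc)

lemma per_shift {f : ℝ → ℝ} (hf : ∀ x, f (x + 2 * π) = f x) (s : ℝ) :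
    ∫ x in (0:ℝ)..(2 * π), f (x + s) = ∫ x in (0:ℝ)..(2 * π), f x := by
  rw [intervalIntegral.integral_comp_add_right]
  have := Function.Periodic.intervalIntegral_add_eq (f := f) (T := 2 * π) hf s 0
  rw [zero_add] at this
  rw [zero_add, add_comm (2 * π) s, this]

namespace AC
variable {ρ X Y : ℝ → ℝ}

lemma subst (h : AC ρ X Y) (φ : ℝ) (F : ℝ → ℝ) :
    ∫ u in (0:ℝ)..π, F (V X Y φ u) * (ρ (φ - u) * sin u)
      = ∫ v in (0:ℝ)..π, F v * (ρ (φ + v) * sin v) := by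
  set H1 : ℝ → ℝ := fun u => ht X Y φ (φ - u) with hH1
  set H2 : ℝ → ℝ := fun v => ht X Y φ (φ + v) with hH2
  have inj : InjOn H2 (Icc 0 π) := (h.mono_right φ).injOn
  set W := Function.invFunOn H2 (Icc 0 π) with hW
  have hWl : ∀ v ∈ Icc (0:ℝ) π, W (H2 v) = v := fun v hv => inj.leftInvOn_invFunOn hv
  have hWV : ∀ u ∈ Icc (0:ℝ) π, W (H1 u) = V X Y φ u := fun u hu => by
    rw [← hWl _ (h.V_mem φ u)]
    congr 1; exact (h.V_spec φ hu).symm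
  have e1 := intervalIntegral.integral_comp_mul_deriv_of_deriv_nonneg (a := 0) (b := π)
    (f := H1) (f' := fun u => ρ (φ - u) * sin u) (g := fun s => F (W s))
    (fun u _ => (h.hd_left φ u).continuousAt.continuousWithinAt)
    (fun u _ => h.hd_left φ u)
    (fun u hu => by
      rw [min_eq_left pi_pos.le, max_eq_right pi_pos.le] at hu
      exact mul_nonneg (h.pos _).le (sin_pos_of_mem_Ioo hu).le)
  have e2 := intervalIntegral.integral_comp_mul_deriv_of_deriv_nonneg (a := 0) (b := π)
    (f := H2) (f' := fun v => ρ (φ + v) * sin v) (g := fun s => F (W s))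
    (fun u _ => (h.hd_right φ u).continuousAt.continuousWithinAt)
    (fun u _ => h.hd_right φ u)
    (fun u hu => by
      rw [min_eq_left pi_pos.le, max_eq_right pi_pos.le] at hu
      exact mul_nonneg (h.pos _).le (sin_pos_of_mem_Ioo hu).le)
  have e0 : H1 0 = H2 0 := by simp [hH1, hH2]
  have epi : H1 π = H2 π := (h.ht_pi φ).symm
  rw [e0, epi, ← e2] at e1
  have l1 : ∫ u in (0:ℝ)..π, F (V X Y φ u) * (ρ (φ - u) * sin u) =
      ∫ x in (0:ℝ)..π, ((fun s ↦ F (W s)) ∘ H1) x * (fun u ↦ ρ (φ - u) * sin u) x := by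
    apply intervalIntegral.integral_congr
    intro u hu
    rw [uIcc_of_le pi_pos.le] at hu
    simp only [Function.comp]
    rw [hWV u hu]
  have l2 : ∫ v in (0:ℝ)..π, F v * (ρ (φ + v) * sin v) =
      ∫ x in (0:ℝ)..π, ((fun s ↦ F (W s)) ∘ H2) x * (fun u ↦ ρ (φ + u) * sin u) x := by
    apply intervalIntegral.integral_congr
    intro u hu
    rw [uIcc_of_le pi_pos.le] at hu
    simp only [Function.comp]
    rw [hWl u hu]
  rw [l1, l2]; exact e1

end AC

/-- the billiard map -/
noncomputable def S (X Y : ℝ → ℝ) (x : ℝ × ℝ) : ℝ × ℝ := (x.1 + V X Y x.1 x.2, V X Y x.1 x.2)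

/-- integration against the invariant measure -/
noncomputable def Int2 (ρ : ℝ → ℝ) (G : ℝ × ℝ → ℝ) : ℝ :=
  ∫ p in (0:ℝ)..(2 * π), ∫ u in (0:ℝ)..π, G (p, u) * (ρ p * ρ (p - u) * sin u)

namespace AC
variable {ρ X Y : ℝ → ℝ}

lemma S_cont (h : AC ρ X Y) : Continuous (S X Y) := by
  have := h.V_cont
  unfold S
  fun_prop

lemma V_per (h : AC ρ X Y) (p u : ℝ) : V X Y (p + 2 * π) u = V X Y p u := by
  apply h.V_uniq _ _ (h.V_mem _ _)
  rw [ht_per_left, ht_per_left, show p + 2 * π + V X Y p u = p + V X Y p u + 2 * π by ring,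
    show p + 2 * π - cl u = p - cl u + 2 * π by ring, h.ht_per, h.ht_per, h.V_spec']

lemma S_per (h : AC ρ X Y) (p u : ℝ) :
    S X Y (p + 2 * π, u) = ((S X Y (p, u)).1 + 2 * π, (S X Y (p, u)).2) := by
  simp only [S, h.V_per, Prod.mk.injEq, and_true]; ring

lemma inv (h : AC ρ X Y) (G : ℝ × ℝ → ℝ) (hG : Continuous G)
    (hp : ∀ p u, G (p + 2 * π, u) = G (p, u)) :
    Int2 ρ (fun x => G (S X Y x)) = Int2 ρ G := by
  have hρ := h.contρ
  unfold Int2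
  have e1 : ∀ p, ∫ u in (0:ℝ)..π, G (S X Y (p, u)) * (ρ p * ρ (p - u) * sin u)
      = ∫ v in (0:ℝ)..π, G (p + v, v) * (ρ p * ρ (p + v) * sin v) := by
    intro p
    have := h.subst p (fun v => G (p + v, v) * ρ p)
    calc _ = _ := by
          apply intervalIntegral.integral_congr
          intro u _
          show _ = G (p + V X Y p u, V X Y p u) * ρ p * (ρ (p - u) * sin u)
          simp only [S]
          ring
      _ = _ := this
      _ = _ := by
          apply intervalIntegral.integral_congr
          intro u _
          simp only
          ring
  simp_rw [e1]
  rw [swap_cont (F := fun p v => G (p + v, v) * (ρ p * ρ (p + v) * sin v))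
      (by simp only [Function.uncurry_def]; fun_prop),
    swap_cont (F := fun p v => G (p, v) * (ρ p * ρ (p - v) * sin v))
      (by simp only [Function.uncurry_def]; fun_prop)]
  apply intervalIntegral.integral_congr
  intro v _
  simp only
  rw [← per_shift (f := fun p => G (p, v) * (ρ p * ρ (p - v) * sin v)) _ v]
  · apply intervalIntegral.integral_congr
    intro p _
    simp only [add_sub_cancel_right]; ring
  · intro p
    rw [hp, h.per, show p + 2 * π - v = p - v + 2 * π by ring, h.per]

/-- area integrand: support function -/
lemma area_slice (h : AC ρ X Y) (φ : ℝ) :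
    2 * ∫ u in (0:ℝ)..π, (lg X Y φ (φ + V X Y φ u) - lg X Y φ (φ - u)) * (ρ (φ - u) * sin u)
      = ∫ ψ in (0:ℝ)..(2 * π), (X ψ * sin ψ - Y ψ * cos ψ) * ρ ψ := by
  have hX := h.contX
  have hY := h.contY
  have hρ := h.contρ
  have hV : Continuous (fun u => V X Y φ u) :=
    h.V_cont.comp (f := fun u => (φ, u)) (by fun_prop)
  have hl : Continuous (fun u => lg X Y φ u) := by unfold lg; fun_prop
  have e1 : ∫ u in (0:ℝ)..π, (lg X Y φ (φ + V X Y φ u) - lg X Y φ (φ - u)) * (ρ (φ - u) * sin u)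
     = (∫ v in (0:ℝ)..π, lg X Y φ (φ + v) * (ρ (φ + v) * sin v))
      - ∫ u in (0:ℝ)..π, lg X Y φ (φ - u) * (ρ (φ - u) * sin u) := by
    rw [← h.subst φ (fun v => lg X Y φ (φ + v)), ← intervalIntegral.integral_sub]
    · apply intervalIntegral.integral_congr
      intro u _
      simp only; ring
    · apply Continuous.intervalIntegrable; fun_prop
    · apply Continuous.intervalIntegrable; fun_prop
  have e2 : ∫ u in (0:ℝ)..π, lg X Y φ (φ - u) * (ρ (φ - u) * sin u)
      = - ∫ v in (-π)..0, lg X Y φ (φ + v) * (ρ (φ + v) * sin v) := by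
    have := intervalIntegral.integral_comp_neg (a := 0) (b := π)
      (fun v => lg X Y φ (φ + v) * (ρ (φ + v) * sin v))
    rw [neg_zero] at this
    rw [← this, ← intervalIntegral.integral_neg]
    apply intervalIntegral.integral_congr
    intro u _
    simp only [sin_neg, ← sub_eq_add_neg]; ring
  rw [e1, e2, sub_neg_eq_add, add_comm, intervalIntegral.integral_add_adjacent_intervals
    (Continuous.intervalIntegrable (by fun_prop) _ _) (Continuous.intervalIntegrable (by fun_prop) _ _)]
  have e6 : ∫ ψ in (0:ℝ)..(2 * π), (X ψ * sin ψ - Y ψ * cos ψ) * ρ ψ =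
      ∫ v in (-π)..π, (X (φ + v) * sin (φ + v) - Y (φ + v) * cos (φ + v)) * ρ (φ + v) := by
    rw [intervalIntegral.integral_comp_add_left (fun ψ => (X ψ * sin ψ - Y ψ * cos ψ) * ρ ψ) φ]
    have := Function.Periodic.intervalIntegral_add_eq
      (f := fun ψ => (X ψ * sin ψ - Y ψ * cos ψ) * ρ ψ) (T := 2 * π)
      (fun x => by simp [h.pX, h.pY, h.per]) 0 (φ + -π)
    rw [zero_add, show φ + -π + 2 * π = φ + π by ring] at this
    exact this
  rw [e6]
  have hd : ∀ v ∈ uIcc (-π) π, HasDerivAt (fun v => lg X Y φ (φ + v) * ht X Y φ (φ + v))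
      (ρ (φ + v) * cos v * ht X Y φ (φ + v) + lg X Y φ (φ + v) * (ρ (φ + v) * sin v)) v := by
    intro v _
    have := (h.lg_deriv φ (φ + v)).comp_const_add φ v
    rw [add_sub_cancel_left] at this
    exact this.mul (h.hd_right φ v)
  have hh : Continuous (fun u => ht X Y φ u) := by unfold ht; fun_prop
  have e3 := intervalIntegral.integral_eq_sub_of_hasDerivAt hd
    (Continuous.intervalIntegrable (by fun_prop) _ _)
  have e4 : lg X Y φ (φ + π) = lg X Y φ (φ + -π) := by
    rw [← h.lg_per φ (φ + -π)]; congr 1; ring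
  have e5 : ht X Y φ (φ + π) = ht X Y φ (φ + -π) := by
    rw [← h.ht_per φ (φ + -π)]; congr 1; ring
  rw [e4, e5, sub_self] at e3
  rw [← sub_eq_zero, ← e3, ← intervalIntegral.integral_const_mul, ← intervalIntegral.integral_sub
    (Continuous.intervalIntegrable (by fun_prop) _ _) (Continuous.intervalIntegrable (by fun_prop) _ _)]
  apply intervalIntegral.integral_congr
  intro v _
  simp only [lg, ht, sin_add, cos_add]
  ring

end AC
end SB


namespace SB
open Real Filter Topology MeasureTheory

namespace AC
variable {ρ X Y : ℝ → ℝ}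

lemma sin_slice (h : AC ρ X Y)
    (hC : ∫ φ in (0:ℝ)..(2 * π), ρ φ * cos (2 * φ) = 0)
    (hS : ∫ φ in (0:ℝ)..(2 * π), ρ φ * sin (2 * φ) = 0) (φ : ℝ) :
    ∫ u in (0:ℝ)..(2 * π), ρ (φ - u) * sin u ^ 2 = (∫ φ in (0:ℝ)..(2 * π), ρ φ) / 2 := by
  have hρ := h.contρ
  have e1 : ∫ u in (0:ℝ)..(2 * π), ρ (φ - u) * sin u ^ 2
      = ∫ ψ in (0:ℝ)..(2 * π), ρ ψ * sin (φ - ψ) ^ 2 := by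
    have := intervalIntegral.integral_comp_sub_left (a := 0) (b := 2 * π)
      (fun ψ => ρ ψ * sin (φ - ψ) ^ 2) φ
    simp only [sub_sub_cancel, sub_zero] at this
    rw [this]
    have := Function.Periodic.intervalIntegral_add_eq
      (f := fun ψ => ρ ψ * sin (φ - ψ) ^ 2) (T := 2 * π)
      (fun x => by
        simp only [h.per]
        rw [show φ - (x + 2 * π) = φ - x - 2 * π by ring, sin_sub_two_pi]) (φ - 2 * π) 0
    rw [zero_add, sub_add_cancel] at this
    exact this
  rw [e1]
  have e2 : ∀ ψ, ρ ψ * sin (φ - ψ) ^ 2 = ρ ψ * (1 / 2)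
      - (ρ ψ * cos (2 * ψ) * (cos (2 * φ) / 2) + ρ ψ * sin (2 * ψ) * (sin (2 * φ) / 2)) := by
    intro ψ
    have : sin (φ - ψ) ^ 2 = 1 / 2 - cos (2 * φ - 2 * ψ) / 2 := by
      rw [sin_sq_eq_half_sub]; congr 3; ring
    rw [this, cos_sub]; ring
  simp_rw [e2]
  rw [intervalIntegral.integral_sub (Continuous.intervalIntegrable (by fun_prop) _ _)
    (Continuous.intervalIntegrable (by fun_prop) _ _),
    intervalIntegral.integral_add (Continuous.intervalIntegrable (by fun_prop) _ _)
    (Continuous.intervalIntegrable (by fun_prop) _ _), intervalIntegral.integral_mul_const,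
    intervalIntegral.integral_mul_const, intervalIntegral.integral_mul_const, hC, hS]
  ring

lemma sin_total (h : AC ρ X Y)
    (hC : ∫ φ in (0:ℝ)..(2 * π), ρ φ * cos (2 * φ) = 0)
    (hS : ∫ φ in (0:ℝ)..(2 * π), ρ φ * sin (2 * φ) = 0) :
    Int2 ρ (fun x => sin x.2) = (∫ φ in (0:ℝ)..(2 * π), ρ φ) ^ 2 / 4 := by
  have hρ := h.contρ
  set L := ∫ φ in (0:ℝ)..(2 * π), ρ φ with hL
  have full : ∫ p in (0:ℝ)..(2 * π), ∫ u in (0:ℝ)..(2 * π), ρ p * ρ (p - u) * sin u ^ 2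
      = L ^ 2 / 2 := by
    have : ∀ p, ∫ u in (0:ℝ)..(2 * π), ρ p * ρ (p - u) * sin u ^ 2 = ρ p * (L / 2) := by
      intro p
      rw [← h.sin_slice hC hS p, ← intervalIntegral.integral_const_mul]
      simp only [mul_assoc]
    simp_rw [this]
    rw [intervalIntegral.integral_mul_const, ← hL]; ring
  rw [swap_cont (by simp only [Function.uncurry_def]; fun_prop)] at full
  set J : ℝ → ℝ := fun u => ∫ p in (0:ℝ)..(2 * π), ρ p * ρ (p - u) * sin u ^ 2 with hJ
  have hJc : Continuous J := by
    apply intervalIntegral.continuous_parametric_intervalIntegral_of_continuous'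
    simp only [Function.uncurry_def]; fun_prop
  have e0 : Int2 ρ (fun x => sin x.2) = ∫ u in (0:ℝ)..π, J u := by
    unfold Int2
    rw [swap_cont (by simp only [Function.uncurry_def]; fun_prop)]
    apply intervalIntegral.integral_congr
    intro u _
    apply intervalIntegral.integral_congr
    intro p _
    simp only; ring
  have sym : ∀ u, J (2 * π - u) = J u := by
    intro u
    simp only [hJ]
    rw [← per_shift (f := fun p => ρ p * ρ (p - u) * sin u ^ 2) _ u]
    · apply intervalIntegral.integral_congr
      intro p _
      simp only
      rw [sin_two_pi_sub, show p - (2 * π - u) = p + u - 2 * π by ring, add_sub_cancel_right,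
        ← h.per (p + u - 2 * π), sub_add_cancel]
      ring
    · intro p
      rw [h.per, show p + 2 * π - u = p - u + 2 * π by ring, h.per]
  have e1 : ∫ u in π..(2 * π), J u = ∫ u in (0:ℝ)..π, J u := by
    have := intervalIntegral.integral_comp_sub_left (a := 0) (b := π) J (2 * π)
    simp_rw [sym] at this
    rw [this]; congr 1 <;> ring
  have e2 : ∫ u in (0:ℝ)..(2 * π), J u = L ^ 2 / 2 := full
  rw [← intervalIntegral.integral_add_adjacent_intervals (b := π) (hJc.intervalIntegrable _ _)
    (hJc.intervalIntegrable _ _), e1] at e2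
  rw [e0]; linarith

end AC

/-- diagonal Jacobi coefficient -/
noncomputable def al (ρ X Y : ℝ → ℝ) (x : ℝ × ℝ) : ℝ :=
  (lg X Y x.1 (x.1 + V X Y x.1 x.2) - lg X Y x.1 (x.1 - cl x.2)) / ρ x.1

namespace AC
variable {ρ X Y : ℝ → ℝ}

lemma al_cont (h : AC ρ X Y) : Continuous (al ρ X Y) := by
  have := h.V_cont
  have := cl_cont
  have := h.contX
  have := h.contY
  have := h.contρ
  have := fun x : ℝ × ℝ => (h.pos x.1).ne'
  unfold al lg
  fun_prop (disch := assumption)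

lemma al_per (h : AC ρ X Y) (p u : ℝ) : al ρ X Y (p + 2 * π, u) = al ρ X Y (p, u) := by
  simp only [al]
  rw [h.V_per, h.per, lg_per_left, lg_per_left, show p + 2 * π + V X Y p u = p + V X Y p u + 2 * π by ring,
    show p + 2 * π - cl u = p - cl u + 2 * π by ring, h.lg_per, h.lg_per]

lemma al_total (h : AC ρ X Y) :
    Int2 ρ (al ρ X Y) = π * ∫ ψ in (0:ℝ)..(2 * π), (X ψ * sin ψ - Y ψ * cos ψ) * ρ ψ := by
  unfold Int2
  have : ∀ p, ∫ u in (0:ℝ)..π, al ρ X Y (p, u) * (ρ p * ρ (p - u) * sin u) =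
      (∫ ψ in (0:ℝ)..(2 * π), (X ψ * sin ψ - Y ψ * cos ψ) * ρ ψ) / 2 := by
    intro p
    rw [← h.area_slice p, mul_div_cancel_left₀ _ (two_ne_zero)]
    apply intervalIntegral.integral_congr
    intro u hu
    rw [uIcc_of_le pi_pos.le] at hu
    simp only [al, cl_eq hu]
    have := (h.pos p).ne'
    field_simp
  simp_rw [this]
  simp; ring

lemma S_iter_per (h : AC ρ X Y) (k : ℕ) : ∀ p u, (S X Y)^[k] (p + 2 * π, u) =
    (((S X Y)^[k] (p, u)).1 + 2 * π, ((S X Y)^[k] (p, u)).2) := by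
  induction k with
  | zero => simp
  | succ k ih =>
    intro p u
    rw [Function.iterate_succ_apply', ih, h.S_per, Function.iterate_succ_apply' (S X Y) k (p, u)]

lemma inv_iter (h : AC ρ X Y) (G : ℝ × ℝ → ℝ) (hG : Continuous G)
    (hp : ∀ p u, G (p + 2 * π, u) = G (p, u)) (k : ℕ) :
    Int2 ρ (fun x => G ((S X Y)^[k] x)) = Int2 ρ G := by
  induction k with
  | zero => simp
  | succ k ih =>
    rw [← ih]
    simp_rw [Function.iterate_succ_apply]
    apply h.inv (fun x => G ((S X Y)^[k] x))
    · exact hG.comp (h.S_cont.iterate k)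
    · intro p u; rw [h.S_iter_per, hp]

lemma Int2_add (h : AC ρ X Y) {G H : ℝ × ℝ → ℝ} (hG : Continuous G) (hH : Continuous H) :
    Int2 ρ (fun x => G x + H x) = Int2 ρ G + Int2 ρ H := by
  have hρ := h.contρ
  unfold Int2
  rw [← intervalIntegral.integral_add]
  · apply intervalIntegral.integral_congr
    intro p _
    simp only
    rw [← intervalIntegral.integral_add (Continuous.intervalIntegrable (by fun_prop) _ _)
      (Continuous.intervalIntegrable (by fun_prop) _ _)]
    simp only [add_mul]
  · apply Continuous.intervalIntegrable
    apply intervalIntegral.continuous_parametric_intervalIntegral_of_continuous'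
    simp only [Function.uncurry_def]; fun_prop
  · apply Continuous.intervalIntegrable
    apply intervalIntegral.continuous_parametric_intervalIntegral_of_continuous'
    simp only [Function.uncurry_def]; fun_prop

lemma Int2_sum (h : AC ρ X Y) (G : ℕ → ℝ × ℝ → ℝ) (hG : ∀ k, Continuous (G k)) (N : ℕ) :
    Int2 ρ (fun x => ∑ k ∈ Finset.range N, G k x) = ∑ k ∈ Finset.range N, Int2 ρ (G k) := by
  induction N with
  | zero => simp [Int2]
  | succ N ih =>
    simp_rw [Finset.sum_range_succ]
    rw [h.Int2_add (by fun_prop) (hG N), ih]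

lemma Int2_mono (h : AC ρ X Y) {G H : ℝ × ℝ → ℝ} (hG : Continuous G) (hH : Continuous H)
    (hle : ∀ p, ∀ u ∈ Ioo 0 π, G (p, u) ≤ H (p, u)) : Int2 ρ G ≤ Int2 ρ H := by
  have hρ := h.contρ
  unfold Int2
  apply intervalIntegral.integral_mono_on (by positivity)
  · apply Continuous.intervalIntegrable
    apply intervalIntegral.continuous_parametric_intervalIntegral_of_continuous'
    simp only [Function.uncurry_def]; fun_prop
  · apply Continuous.intervalIntegrable
    apply intervalIntegral.continuous_parametric_intervalIntegral_of_continuous'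
    simp only [Function.uncurry_def]; fun_prop
  intro p _
  apply intervalIntegral.integral_mono_on_of_le_Ioo pi_pos.le
  · apply Continuous.intervalIntegrable; fun_prop
  · apply Continuous.intervalIntegrable; fun_prop
  intro u hu
  exact mul_le_mul_of_nonneg_right (hle p u hu)
    (mul_nonneg (mul_nonneg (h.pos _).le (h.pos _).le) (sin_pos_of_mem_Ioo hu).le)

/-- The integrated Hopf inequality. -/
lemma hopf_ineq (h : AC ρ X Y)
    (hC : ∫ φ in (0:ℝ)..(2 * π), ρ φ * cos (2 * φ) = 0)
    (hS : ∫ φ in (0:ℝ)..(2 * π), ρ φ * sin (2 * φ) = 0)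
    (hQ : ∀ N : ℕ, ∀ p, ∀ u ∈ Ioo 0 π,
      2 * ∑ k ∈ Finset.range N, sin (((S X Y)^[k + 1] (p, u)).2)
        ≤ ∑ k ∈ Finset.range (N + 1), al ρ X Y ((S X Y)^[k] (p, u))) :
    (∫ φ in (0:ℝ)..(2 * π), ρ φ) ^ 2 / 2 ≤
      π * ∫ ψ in (0:ℝ)..(2 * π), (X ψ * sin ψ - Y ψ * cos ψ) * ρ ψ := by
  have hit : ∀ k, Continuous ((S X Y)^[k]) := fun k => h.S_cont.iterate k
  have hal := h.al_cont
  have key : ∀ N : ℕ, (N : ℝ) * ((∫ φ in (0:ℝ)..(2 * π), ρ φ) ^ 2 / 2) ≤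
      (N + 1) * (π * ∫ ψ in (0:ℝ)..(2 * π), (X ψ * sin ψ - Y ψ * cos ψ) * ρ ψ) := by
    intro N
    have e1 := h.Int2_sum (fun k x => 2 * sin (((S X Y)^[k + 1] x).2))
      (fun k => by have := hit (k + 1); fun_prop) N
    have e2 := h.Int2_sum (fun k x => al ρ X Y ((S X Y)^[k] x))
      (fun k => hal.comp (hit k)) (N + 1)
    have e3 := h.Int2_mono (G := fun x => ∑ k ∈ Finset.range N, 2 * sin (((S X Y)^[k + 1] x).2))
      (H := fun x => ∑ k ∈ Finset.range (N + 1), al ρ X Y ((S X Y)^[k] x))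
      (by apply continuous_finsetSum; intro k _; have := hit (k + 1); fun_prop)
      (by apply continuous_finsetSum; intro k _; exact hal.comp (hit k))
      (by intro p u hu; have := hQ N p u hu; rw [Finset.mul_sum] at this; exact this)
    have e4 : Int2 ρ (fun x => 2 * sin x.2) = (∫ φ in (0:ℝ)..(2 * π), ρ φ) ^ 2 / 2 := by
      have : (fun x : ℝ × ℝ => 2 * sin x.2) = fun x => sin x.2 + sin x.2 := by
        funext x; ring
      rw [this, h.Int2_add (by fun_prop) (by fun_prop), h.sin_total hC hS]; ring
    rw [e1, e2] at e3
    have e5 : ∀ k ∈ Finset.range N, Int2 ρ (fun x => 2 * sin (((S X Y)^[k + 1] x).2)) =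
        (∫ φ in (0:ℝ)..(2 * π), ρ φ) ^ 2 / 2 := fun k _ => by
      rw [← e4]; exact h.inv_iter (fun x => 2 * sin x.2) (by fun_prop) (by simp) (k + 1)
    have e6 : ∀ k ∈ Finset.range (N + 1), Int2 ρ (fun x => al ρ X Y ((S X Y)^[k] x)) =
        π * ∫ ψ in (0:ℝ)..(2 * π), (X ψ * sin ψ - Y ψ * cos ψ) * ρ ψ := fun k _ => by
      rw [← h.al_total]; exact h.inv_iter _ hal h.al_per k
    rw [Finset.sum_congr rfl e5, Finset.sum_congr rfl e6] at e3
    simpa using e3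
  by_contra hcon
  push Not at hcon
  set a := (∫ φ in (0:ℝ)..(2 * π), ρ φ) ^ 2 / 2
  set b := π * ∫ ψ in (0:ℝ)..(2 * π), (X ψ * sin ψ - Y ψ * cos ψ) * ρ ψ
  obtain ⟨N, hN⟩ := exists_nat_gt (b / (a - b))
  rw [div_lt_iff₀ (by linarith)] at hN
  have := key N
  linarith

end AC
end SB


namespace SB
open Real Filter Topology MeasureTheory

lemma exists_biinf {α : Type*} (R : ℤ → α → α → Prop) (hf : ∀ n x, ∃ y, R n x y)
    (hb : ∀ n y, ∃ x, R n x y) (x0 : α) : ∃ z : ℤ → α, z 0 = x0 ∧ ∀ n, R n (z n) (z (n + 1)) := by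
  choose F hF using hf
  choose G hG using hb
  let zp : ℕ → α := fun k => Nat.rec x0 (fun k a => F k a) k
  let zm : ℕ → α := fun k => Nat.rec x0 (fun k a => G (Int.negSucc k) a) k
  let z : ℤ → α := fun n => match n with
    | Int.ofNat k => zp k
    | Int.negSucc k => zm (k + 1)
  refine ⟨z, rfl, ?_⟩
  intro n
  match n with
  | Int.ofNat k => exact hF k (zp k)
  | Int.negSucc 0 => exact hG (Int.negSucc 0) x0
  | Int.negSucc (k + 1) => exact hG (Int.negSucc (k + 1)) (zm (k + 1))

/-- the open phase strip -/
def strip : Set (ℝ × ℝ) := {x | x.2 ∈ Ioo 0 π}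

/-- absence of conjugate points in the angle parametrisation -/
def NC (ρ X Y : ℝ → ℝ) : Prop := ∀ φ : ℤ → ℝ, (∀ n, 0 < sin (φ (n + 1) - φ n)) →
  (∀ n, ht X Y (φ n) (φ (n + 1)) = ht X Y (φ n) (φ (n - 1))) → ∀ ζ : ℤ → ℝ,
  (∀ n, sin (φ n - φ (n - 1)) * ζ (n - 1)
    - (lg X Y (φ n) (φ (n + 1)) - lg X Y (φ n) (φ (n - 1))) / ρ (φ n) * ζ n
    + sin (φ (n + 1) - φ n) * ζ (n + 1) = 0) → ζ ≠ 0 →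
  ¬ ∃ M N : ℤ, M < N ∧ ζ M = 0 ∧ ζ N = 0

/-- the distinguished Jacobi field -/
noncomputable def Z (ρ X Y : ℝ → ℝ) : ℕ → ℝ × ℝ → ℝ
  | 0, _ => 0
  | 1, _ => 1
  | (k + 2), x => (al ρ X Y ((S X Y)^[k] x) * Z ρ X Y (k + 1) x
      - sin (((S X Y)^[k] x).2) * Z ρ X Y k x) / sin (((S X Y)^[k + 1] x).2)

namespace AC
variable {ρ X Y : ℝ → ℝ}

lemma S_strip (h : AC ρ X Y) {x : ℝ × ℝ} (hx : x ∈ strip) : S X Y x ∈ strip := h.V_Ioo x.1 hx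

lemma S_iter_strip (h : AC ρ X Y) {x : ℝ × ℝ} (hx : x ∈ strip) (k : ℕ) : (S X Y)^[k] x ∈ strip := by
  induction k with
  | zero => exact hx
  | succ k ih => rw [Function.iterate_succ_apply']; exact h.S_strip ih

lemma S_surj (h : AC ρ X Y) {y : ℝ × ℝ} (hy : y ∈ strip) : ∃ x ∈ strip, S X Y x = y := by
  obtain ⟨u, hu, e⟩ := h.V_surj (y.1 - y.2) hy
  refine ⟨(y.1 - y.2, u), hu, ?_⟩
  simp [S, e]

lemma exists_orbit (h : AC ρ X Y) {x : ℝ × ℝ} (hx : x ∈ strip) :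
    ∃ z : ℤ → ℝ × ℝ, z 0 = x ∧ (∀ n, z n ∈ strip) ∧ ∀ n, z (n + 1) = S X Y (z n) := by
  obtain ⟨z, h0, hz⟩ := exists_biinf (α := strip) (fun _ a b => b.1 = S X Y a.1)
    (fun _ a => ⟨⟨S X Y a.1, h.S_strip a.2⟩, rfl⟩)
    (fun _ b => by
      obtain ⟨a, ha, e⟩ := h.S_surj b.2
      exact ⟨⟨a, ha⟩, e.symm⟩) ⟨x, hx⟩
  exact ⟨fun n => (z n).1, by simp [h0], fun n => (z n).2, hz⟩

lemma Z_ne (h : AC ρ X Y) (hnc : NC ρ X Y) {x : ℝ × ℝ} (hx : x ∈ strip) (k : ℕ) :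
    Z ρ X Y (k + 1) x ≠ 0 := by
  obtain ⟨z, z0, zs, zS⟩ := h.exists_orbit hx
  have zk : ∀ k : ℕ, z k = (S X Y)^[k] x := by
    intro k
    induction k with
    | zero => exact z0
    | succ k ih => rw [Function.iterate_succ_apply', ← ih, ← zS]; rfl
  have zd : ∀ n, (z n).2 = (z n).1 - (z (n - 1)).1 := by
    intro n
    have := zS (n - 1)
    rw [sub_add_cancel] at this
    rw [this]; simp [S]
  have zd' : ∀ n, (z (n + 1)).2 = (z (n + 1)).1 - (z n).1 := by
    intro n
    have := zd (n + 1)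
    rwa [add_sub_cancel_right] at this
  have sp : ∀ n, 0 < sin ((z n).2) := fun n => sin_pos_of_mem_Ioo (zs n)
  obtain ⟨w, w0, hw⟩ := exists_biinf (α := ℝ × ℝ) (fun n a b => b.1 = a.2 ∧
      sin ((z n).2) * a.1 - al ρ X Y (z n) * a.2 + sin ((z (n + 1)).2) * b.2 = 0)
    (fun n a => ⟨(a.2, (al ρ X Y (z n) * a.2 - sin ((z n).2) * a.1) / sin ((z (n + 1)).2)), rfl, by
      have := (sp (n + 1)).ne'
      field_simp; ring⟩)
    (fun n b => ⟨((al ρ X Y (z n) * b.1 - sin ((z (n+1)).2) * b.2) / sin ((z n).2), b.1), rfl, by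
      have := (sp n).ne'
      field_simp; ring⟩) (0, 1)
  have hal : ∀ n, al ρ X Y (z n) =
      (lg X Y (z n).1 (z (n + 1)).1 - lg X Y (z n).1 (z (n - 1)).1) / ρ (z n).1 := by
    intro n
    have e1 := zS n
    have e2 := zd n
    have : (z n).1 - cl (z n).2 = (z (n-1)).1 := by
      rw [cl_eq (Ioo_subset_Icc_self (zs n))]; linarith
    unfold al
    rw [this, e1]; simp [S]
  have hn := hnc (fun n => (z n).1) (fun n => by rw [← zd']; exact sp _)
    (fun n => by
      have e1 := zS n
      have e2 := zd n
      have : (z n).1 - (z n).2 = (z (n-1)).1 := by linarith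
      rw [← this, ← h.V_spec _ (Ioo_subset_Icc_self (zs n)), e1]; simp [S])
    (fun n => (w n).2) (fun n => by
      rw [← zd, ← zd', ← hal]
      have := (hw n).2
      have e := (hw (n-1)).1
      rw [sub_add_cancel] at e
      rw [← e]; exact this)
    (fun e => by
      have := congrFun e 0
      simp [w0] at this)
  have wZ : ∀ k : ℕ, (w k).1 = Z ρ X Y k x ∧ (w k).2 = Z ρ X Y (k + 1) x := by
    intro k
    induction k with
    | zero => simp [w0, Z]
    | succ k ih =>
      obtain ⟨e1, e2⟩ := hw k
      refine ⟨by push_cast; rw [e1, ih.2], ?_⟩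
      simp only [Z, ← ih.1, ← ih.2, ← zk]
      have := (sp (k + 1)).ne'
      push_cast
      rw [eq_div_iff this]; linarith
  intro h0
  apply hn
  refine ⟨-1, k, by omega, ?_, ?_⟩
  · have := (hw (-1)).1
    simp [w0] at this
    simp [← this]
  · rw [(wZ k).2, h0]

lemma Z_cont (h : AC ρ X Y) (k : ℕ) : ContinuousOn (Z ρ X Y k) strip ∧
    ContinuousOn (Z ρ X Y (k + 1)) strip := by
  induction k with
  | zero => simp only [Z]; exact ⟨continuousOn_const, continuousOn_const⟩
  | succ k ih =>
    refine ⟨ih.2, ?_⟩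
    have e : Z ρ X Y (k + 1 + 1) = fun x => (al ρ X Y ((S X Y)^[k] x) * Z ρ X Y (k + 1) x
      - sin (((S X Y)^[k] x).2) * Z ρ X Y k x) / sin (((S X Y)^[k + 1] x).2) := by
      funext x; simp only [Z]
    rw [e]
    have c1 := h.S_cont.iterate k
    have c2 := h.S_cont.iterate (k + 1)
    have c3 := h.al_cont.comp c1
    refine ContinuousOn.div ?_ (Continuous.continuousOn (by fun_prop))
      fun x hx => (sin_pos_of_mem_Ioo (h.S_iter_strip hx _)).ne'
    refine (c3.continuousOn.mul ih.2).sub (ContinuousOn.mul (Continuous.continuousOn (by fun_prop)) ih.1)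

end AC
end SB


namespace SB
open Real Filter Topology MeasureTheory

/-- the half strip -/
def strip' : Set (ℝ × ℝ) := {x | x.2 ∈ Ioo 0 (π / 2)}

lemma ratio_lim {r : ℝ → ℝ} (hr : Continuous r) (e : ℝ) (f : ℝ → ℝ → ℝ) (g g' : ℝ → ℝ)
    (hf : ∀ φ t, HasDerivAt (f φ) (r (φ + e * t) * g' t) t) (hg : ∀ t, HasDerivAt g (g' t) t)
    (hpos : ∀ t ∈ Ioo 0 (π / 2), 0 < g' t) (p : ℝ) :
    Tendsto (fun x : ℝ × ℝ => (f x.1 x.2 - f x.1 0) / (g x.2 - g 0)) (𝓝[strip'] (p, 0)) (𝓝 (r p)) := by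
  have key : ∀ x : ℝ × ℝ, x ∈ strip' → ∃ c ∈ Ioo 0 x.2,
      (f x.1 x.2 - f x.1 0) / (g x.2 - g 0) = r (x.1 + e * c) := by
    intro x hx
    obtain ⟨c, hc, h⟩ := exists_ratio_hasDerivAt_eq_ratio_slope (f x.1)
      (fun t => r (x.1 + e * t) * g' t) hx.1
      (fun t _ => (hf x.1 t).continuousAt.continuousWithinAt) (fun t _ => hf x.1 t) g g'
      (fun t _ => (hg t).continuousAt.continuousWithinAt) (fun t _ => hg t)
    refine ⟨c, hc, ?_⟩
    obtain ⟨d, hd, h2⟩ := exists_hasDerivAt_eq_slope g g' hx.1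
      (fun t _ => (hg t).continuousAt.continuousWithinAt) (fun t _ => hg t)
    have hd' := hpos d ⟨hd.1, hd.2.trans hx.2⟩
    have hc' := hpos c ⟨hc.1, hc.2.trans hx.2⟩
    have hne : g x.2 - g 0 ≠ 0 := by
      intro h0; rw [h2, h0] at hd'; simp at hd'
    rw [div_eq_iff hne]
    apply mul_right_cancel₀ hc'.ne'
    rw [← h]; ring
  choose! c hc h using key
  have hev : ∀ᶠ x in 𝓝[strip'] ((p, 0) : ℝ × ℝ), x ∈ strip' := self_mem_nhdsWithin
  have t1 : Tendsto (fun x : ℝ × ℝ => x.1) (𝓝[strip'] (p, 0)) (𝓝 p) :=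
    (continuous_fst.tendsto' _ _ rfl).mono_left nhdsWithin_le_nhds
  have t2 : Tendsto (fun x : ℝ × ℝ => x.2) (𝓝[strip'] (p, 0)) (𝓝 0) :=
    (continuous_snd.tendsto' _ _ rfl).mono_left nhdsWithin_le_nhds
  have t3 : Tendsto c (𝓝[strip'] (p, 0)) (𝓝 0) :=
    tendsto_of_tendsto_of_tendsto_of_le_of_le' tendsto_const_nhds t2
      (hev.mono fun x hx => (hc x hx).1.le) (hev.mono fun x hx => (hc x hx).2.le)
  have t4 := (hr.tendsto (p + e * 0)).comp (t1.add (t3.const_mul e))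
  rw [mul_zero, add_zero] at t4
  exact t4.congr' (hev.mono fun x hx => (h x hx).symm)

namespace AC
variable {ρ X Y : ℝ → ℝ}

lemma lim_S (h : AC ρ X Y) (p : ℝ) : Tendsto (S X Y) (𝓝[strip'] (p, 0)) (𝓝[strip'] (p, 0)) := by
  have e : S X Y (p, 0) = (p, 0) := by simp [S, h.V_zero]
  have t : Tendsto (S X Y) (𝓝[strip'] (p, 0)) (𝓝 (p, 0)) :=
    (h.S_cont.tendsto' _ _ e).mono_left nhdsWithin_le_nhds
  refine tendsto_nhdsWithin_iff.2 ⟨t, ?_⟩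
  have t2 : Tendsto (fun x => (S X Y x).2) (𝓝[strip'] (p, 0)) (𝓝 0) :=
    (continuous_snd.tendsto' ((p, 0) : ℝ × ℝ) 0 rfl).comp t
  filter_upwards [self_mem_nhdsWithin, t2.eventually (gt_mem_nhds (show (0:ℝ) < π / 2 by positivity))]
    with x hx h2
  exact ⟨(h.V_Ioo x.1 ⟨hx.1, hx.2.trans (by linarith [pi_pos])⟩).1, h2⟩

lemma lim_sin (h : AC ρ X Y) (p : ℝ) :
    Tendsto (fun x : ℝ × ℝ => sin (S X Y x).2 / sin x.2) (𝓝[strip'] (p, 0)) (𝓝 1) ∧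
    Tendsto (fun x : ℝ × ℝ => al ρ X Y x / sin x.2) (𝓝[strip'] (p, 0)) (𝓝 2) := by
  set F := 𝓝[strip'] ((p, 0) : ℝ × ℝ) with hF
  have hR := (h.pos p).ne'
  have hρ := h.contρ
  have tS := h.lim_S p
  have tT : Tendsto (fun x : ℝ × ℝ => (x.1, (S X Y x).2)) F F := by
    refine tendsto_nhdsWithin_iff.2 ⟨?_, (tendsto_nhdsWithin_iff.1 tS).2⟩
    have hc := h.S_cont
    refine Tendsto.mono_left ((continuous_fst.prodMk (continuous_snd.comp hc)).tendsto' _ _ ?_) nhdsWithin_le_nhds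
    simp [S, h.V_zero]
  have g1 : ∀ t, HasDerivAt (fun t => -cos t) (sin t) t := fun t => by
    have := (hasDerivAt_cos t).neg
    rw [neg_neg] at this; exact this
  have s1 : ∀ t ∈ Ioo 0 (π / 2), 0 < sin t := fun t ht =>
    sin_pos_of_pos_of_lt_pi ht.1 (by linarith [ht.2, pi_pos])
  have c1 : ∀ t ∈ Ioo 0 (π / 2), 0 < cos t := fun t ht =>
    cos_pos_of_mem_Ioo ⟨by linarith [ht.1, pi_pos], ht.2⟩
  have q1 := (ratio_lim hρ 1 (fun φ t => ht X Y φ (φ + t)) _ _ (fun φ t => by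
    simpa using h.hd_right φ t) g1 s1 p).comp tT
  have q2 := ratio_lim hρ (-1) (fun φ t => ht X Y φ (φ - t)) _ _ (fun φ t => by
    simpa [sub_eq_add_neg] using h.hd_left φ t) g1 s1 p
  have q3 := (ratio_lim hρ 1 (fun φ t => lg X Y φ (φ + t)) _ _ (fun φ t => by
    have := (h.lg_deriv φ (φ + t)).comp_const_add φ t
    simpa using this) hasDerivAt_sin c1 p).comp tT
  have q4 := ratio_lim hρ (-1) (fun φ t => - lg X Y φ (φ - t)) _ _ (fun φ t => by
    have := ((h.lg_deriv φ (φ - t)).comp_const_sub φ t).neg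
    refine this.congr_deriv ?_
    rw [sub_sub_cancel_left, cos_neg]; ring_nf) hasDerivAt_sin c1 p
  rw [← hF] at q2 q4
  have hev : ∀ᶠ x in F, x ∈ strip' := self_mem_nhdsWithin
  have hevS : ∀ᶠ x in F, S X Y x ∈ strip' := tS.eventually hev
  have t1 : Tendsto (fun x : ℝ × ℝ => x.1) F (𝓝 p) :=
    (continuous_fst.tendsto' _ _ rfl).mono_left nhdsWithin_le_nhds
  have t2 : Tendsto (fun x : ℝ × ℝ => x.2) F (𝓝 0) :=
    (continuous_snd.tendsto' _ _ rfl).mono_left nhdsWithin_le_nhds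
  have t3 : Tendsto (fun x : ℝ × ℝ => (S X Y x).2) F (𝓝 0) := t2.comp tS
  have k1 : Tendsto (fun x : ℝ × ℝ => 1 + cos x.2) F (𝓝 2) := by
    have := ((continuous_const (y := (1:ℝ))).add continuous_cos).tendsto' 0 2 (by norm_num)
    exact this.comp t2
  have k2 : Tendsto (fun x : ℝ × ℝ => 1 + cos (S X Y x).2) F (𝓝 2) := k1.comp tS
  have hsq := (((q2.div q1 hR).mul (k2.div k1 two_ne_zero))).sqrt
  rw [div_self hR, div_self two_ne_zero, one_mul, sqrt_one] at hsq
  have L1 : Tendsto (fun x : ℝ × ℝ => sin (S X Y x).2 / sin x.2) F (𝓝 1) := by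
    refine hsq.congr' ?_
    filter_upwards [hev, hevS] with x hx hSx
    have a1 := s1 _ hx
    have a2 := s1 _ hSx
    have b1 := c1 _ hx
    have b2 := c1 _ hSx
    have d1 := sin_sq_add_cos_sq x.2
    have d2 := sin_sq_add_cos_sq (S X Y x).2
    rw [← sqrt_sq (div_pos a2 a1).le]
    congr 1
    have e := h.V_spec x.1 (u := x.2) ⟨hx.1.le, hx.2.le.trans (by linarith [pi_pos])⟩
    have hx2 : 0 < 1 - cos x.2 := by nlinarith
    have hs2 : 0 < 1 - cos (S X Y x).2 := by nlinarith
    simp only [Pi.div_apply, Function.comp_apply, cos_zero, sub_zero, add_zero, neg_sub_neg]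
    have f1 : (S X Y x).2 = V X Y x.1 x.2 := rfl
    rw [f1] at a2 b2 d2 hs2 ⊢
    rw [e]
    have hne : 0 < ht X Y x.1 (x.1 - x.2) - ht X Y x.1 x.1 := by
      have := h.mono_left x.1 (left_mem_Icc.2 pi_pos.le)
        (show x.2 ∈ Icc 0 π from ⟨hx.1.le, hx.2.le.trans (by linarith [pi_pos])⟩) hx.1
      simp only [sub_zero] at this
      linarith
    have hne' := hne.ne'
    have hx2' := hx2.ne'
    have hs2' := hs2.ne'
    have a1' := a1.ne'
    have b1' : 1 + cos x.2 ≠ 0 := by positivity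
    rw [div_pow, show sin x.2 ^ 2 = (1 - cos x.2) * (1 + cos x.2) by linarith,
      show sin (V X Y x.1 x.2) ^ 2 = (1 - cos (V X Y x.1 x.2)) * (1 + cos (V X Y x.1 x.2)) by linarith]
    have k1 : cos 0 - cos x.2 = 1 - cos x.2 := by rw [cos_zero]
    field_simp
  refine ⟨L1, ?_⟩
  have k5 := ((q3.mul L1).add q4).div ((hρ.tendsto p).comp t1) hR
  rw [show (ρ p * 1 + ρ p) / ρ p = 2 by field_simp; norm_num] at k5
  refine k5.congr' ?_
  filter_upwards [hev, hevS] with x hx hSx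
  have a1 := (s1 _ hx).ne'
  have a2 := (s1 _ hSx).ne'
  have r1 := (h.pos x.1).ne'
  simp only [Pi.div_apply, Function.comp_apply, sin_zero, sub_zero, add_zero, al]
  rw [cl_eq ⟨hx.1.le, hx.2.le.trans (by linarith [pi_pos])⟩]
  have f1 : (S X Y x).2 = V X Y x.1 x.2 := rfl
  rw [f1] at a2 ⊢
  field_simp
  ring

lemma Z_lim (h : AC ρ X Y) (p : ℝ) (k : ℕ) :
    Tendsto (Z ρ X Y k) (𝓝[strip'] (p, 0)) (𝓝 k) ∧
    Tendsto (Z ρ X Y (k + 1)) (𝓝[strip'] (p, 0)) (𝓝 (k + 1)) := by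
  induction k with
  | zero => 
    refine ⟨?_, ?_⟩
    · simp only [Nat.cast_zero]; exact tendsto_const_nhds.congr fun x => by simp [Z]
    · simp only [Nat.cast_zero, zero_add]; exact tendsto_const_nhds.congr fun x => by simp [Z]
  | succ k ih =>
    refine ⟨by exact_mod_cast ih.2, ?_⟩
    obtain ⟨l1, l2⟩ := h.lim_sin p
    have tk : Tendsto ((S X Y)^[k]) (𝓝[strip'] (p, 0)) (𝓝[strip'] (p, 0)) :=
      (h.lim_S p).iterate k
    have m1 := l1.comp tk
    have m2 := l2.comp tk
    have m3 := ((m2.mul ih.2).sub ih.1).div m1 one_ne_zero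
    push_cast
    rw [show (2 * ((k:ℝ) + 1) - k) / 1 = k + 1 + 1 by ring] at m3
    refine m3.congr' ?_
    filter_upwards [self_mem_nhdsWithin] with x hx
    have hx' : x ∈ strip := ⟨hx.1, hx.2.trans (by linarith [pi_pos])⟩
    have s1 := (sin_pos_of_mem_Ioo (h.S_iter_strip hx' k)).ne'
    have s2 := (sin_pos_of_mem_Ioo (h.S_iter_strip hx' (k + 1))).ne'
    simp only [Z, Pi.div_apply, Function.comp_apply]
    rw [Function.iterate_succ_apply'] at *
    field_simp

lemma Z_pos (h : AC ρ X Y) (hnc : NC ρ X Y) {x : ℝ × ℝ} (hx : x ∈ strip) (k : ℕ) :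
    0 < Z ρ X Y (k + 1) x := by
  have hconv : Convex ℝ strip :=
    (convex_Ioo 0 π).linear_preimage (LinearMap.snd ℝ ℝ ℝ)
  have hc : ContinuousOn (Z ρ X Y (k + 1)) strip := (h.Z_cont k).2
  have hlim := (h.Z_lim 0 k).2
  have hev := hlim.eventually (lt_mem_nhds (show (0:ℝ) < k + 1 by positivity))
  have hne : (𝓝[strip'] ((0, 0) : ℝ × ℝ)).NeBot := by
    rw [← mem_closure_iff_nhdsWithin_neBot]
    have : strip' = univ ×ˢ Ioo 0 (π / 2) := by ext x; simp [strip']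
    rw [this, closure_prod_eq, closure_Ioo (by positivity)]
    simp; positivity
  obtain ⟨y, hy, hys⟩ := (hev.and self_mem_nhdsWithin).exists
  have hys' : y ∈ strip := ⟨hys.1, hys.2.trans (by linarith [pi_pos])⟩
  by_contra hcon
  push Not at hcon
  obtain ⟨w, hw, hw0⟩ := hconv.isPreconnected.intermediate_value hx hys' hc ⟨hcon, hy.le⟩
  exact h.Z_ne hnc hw k hw0

lemma hQ (h : AC ρ X Y) (hnc : NC ρ X Y) (N : ℕ) (p u : ℝ) (hu : u ∈ Ioo 0 π) :
      2 * ∑ k ∈ Finset.range N, sin (((S X Y)^[k + 1] (p, u)).2)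
        ≤ ∑ k ∈ Finset.range (N + 1), al ρ X Y ((S X Y)^[k] (p, u)) := by
  have hx : ((p, u) : ℝ × ℝ) ∈ strip := hu
  have zp := fun k => h.Z_pos hnc hx k
  have sp := fun k => sin_pos_of_mem_Ioo (h.S_iter_strip hx k)
  set s : ℕ → ℝ := fun k => sin (((S X Y)^[k] (p, u)).2) with hs
  set z : ℕ → ℝ := fun k => Z ρ X Y k (p, u) with hz
  have hrec : ∀ k, al ρ X Y ((S X Y)^[k] (p, u)) * z (k + 1) = s (k + 1) * z (k + 2) + s k * z k := by
    intro k
    have := (sp (k + 1)).ne'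
    simp only [hz, hs, Z]
    field_simp; ring
  have main : ∀ N, 2 * (∑ k ∈ Finset.range N, s (k + 1)) + s (N + 1) * z (N + 2) / z (N + 1) ≤
      ∑ k ∈ Finset.range (N + 1), al ρ X Y ((S X Y)^[k] (p, u)) := by
    intro N
    induction N with
    | zero =>
      have z0 : z 0 = 0 := by simp [hz, Z]
      have := hrec 0
      have z1 := zp 0
      simp only [Finset.range_zero, Finset.sum_empty, Finset.sum_range_one, zero_add] at *
      rw [mul_zero, zero_add, div_le_iff₀ z1]
      rw [this, z0]; simp
    | succ N ih =>
      rw [Finset.sum_range_succ _ (N + 1), Finset.sum_range_succ _ N]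
      have r := hrec (N + 1)
      have z1 := zp N
      have z2 := zp (N + 1)
      have z3 := zp (N + 2)
      have s1 := sp (N + 1)
      have r' : al ρ X Y ((S X Y)^[N + 1] (p, u)) =
          s (N + 1 + 1) * z (N + 1 + 2) / z (N + 1 + 1) + s (N + 1) * z (N + 1) / z (N + 2) := by
        have : z (N + 2) ≠ 0 := z2.ne'
        rw [← add_div, eq_div_iff this, ← r]
      have am : 2 * s (N + 1) ≤ s (N + 1) * z (N + 2) / z (N + 1) + s (N + 1) * z (N + 1) / z (N + 2) := by
        have a1 : 0 < z (N + 1) := z1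
        have a2 : 0 < z (N + 2) := z2
        rw [div_add_div _ _ a1.ne' a2.ne', le_div_iff₀ (mul_pos a1 a2)]
        have a3 : 0 < s (N + 1) := s1
        nlinarith [mul_nonneg a3.le (sq_nonneg (z (N + 2) - z (N + 1)))]
      rw [r']
      linarith
  have := main N
  have q : 0 ≤ s (N + 1) * z (N + 2) / z (N + 1) :=
    div_nonneg (mul_nonneg (sp _).le (zp _).le) (zp _).le
  linarith

end AC
end SB


namespace SB
open Real Filter Topology MeasureTheory

/-- Fourier coefficients on `[0,2π]` of a real function -/
noncomputable def ck (f : ℝ → ℝ) (n : ℤ) : ℂ :=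
  fourierCoeffOn (show (0:ℝ) < 2 * π by positivity) (fun x => (f x : ℂ)) n

lemma ck_eq (f : ℝ → ℝ) (n : ℤ) : ck f n =
    (1 / (2 * π - 0) : ℝ) • ∫ x in (0:ℝ)..(2 * π), fourier (-n) (x : AddCircle (2 * π - 0)) • (f x : ℂ) :=
  fourierCoeffOn_eq_integral _ _ _

lemma ck_zero (f : ℝ → ℝ) : ck f 0 = (((2 * π)⁻¹ * ∫ x in (0:ℝ)..(2 * π), f x : ℝ) : ℂ) := by
  rw [ck_eq]
  simp only [neg_zero, fourier_zero, smul_eq_mul, one_mul, intervalIntegral.integral_ofReal]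
  push_cast
  simp

lemma ck_sub {f g : ℝ → ℝ} (hf : Continuous f) (hg : Continuous g) (n : ℤ) :
    ck (fun x => f x - g x) n = ck f n - ck g n := by
  simp only [ck_eq]
  rw [← smul_sub, ← intervalIntegral.integral_sub]
  · congr 2; funext x; push_cast; simp [mul_sub]
  all_goals
    apply Continuous.intervalIntegrable
    have : Continuous (fun x : ℝ => fourier (-n) (x : AddCircle (2 * π - 0))) :=
      (map_continuous _).comp (AddCircle.continuous_mk' _)
    simp only [smul_eq_mul]
    fun_prop

lemma ck_deriv {f f' : ℝ → ℝ} (hd : ∀ x, HasDerivAt f (f' x) x) (hc : Continuous f')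
    (hp : f (2 * π) = f 0) (n : ℤ) : ck f' n = Complex.I * n * ck f n := by
  by_cases hn : n = 0
  · subst hn
    have : ∫ x in (0:ℝ)..(2 * π), f' x = 0 := by
      rw [intervalIntegral.integral_eq_sub_of_hasDerivAt (fun x _ => hd x)
        (hc.intervalIntegrable _ _), hp, sub_self]
    rw [ck_zero, this]; simp
  · have := fourierCoeffOn_of_hasDerivAt (show (0:ℝ) < 2 * π by positivity)
      (f := fun x => (f x : ℂ)) (f' := fun x => (f' x : ℂ)) hn
      (fun x _ => (hd x).ofReal_comp)
      (Continuous.intervalIntegrable (by fun_prop) _ _)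
    simp only [hp, sub_self, mul_zero, zero_sub] at this
    unfold ck
    rw [this]
    have hπ : (π : ℂ) ≠ 0 := by exact_mod_cast pi_ne_zero
    have hn' : (n : ℂ) ≠ 0 := by exact_mod_cast hn
    have := Complex.I_ne_zero
    push_cast
    field_simp
    ring

lemma ck_parseval {f : ℝ → ℝ} (hc : Continuous f) :
    HasSum (fun n => ‖ck f n‖ ^ 2) ((2 * π)⁻¹ * ∫ x in (0:ℝ)..(2 * π), f x ^ 2) := by
  have := hasSum_sq_fourierCoeffOn (show (0:ℝ) < 2 * π by positivity) (f := fun x => (f x : ℂ))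
    (by
      have hc' : Continuous (fun x => (f x : ℂ)) := by fun_prop
      obtain ⟨C, hC⟩ := (isCompact_Icc (a := (0:ℝ)) (b := 2 * π)).exists_bound_of_continuousOn hc'.continuousOn
      refine MemLp.of_bound hc'.aestronglyMeasurable C ?_
      rw [ae_restrict_iff' measurableSet_Ioc]
      exact ae_of_all _ fun x hx => hC x (Ioc_subset_Icc_self hx))
  simpa [ck] using this

namespace AC
variable {ρ X Y : ℝ → ℝ}

lemma rho_const (h : AC ρ X Y)
    (hI : (∫ φ in (0:ℝ)..(2 * π), ρ φ) ^ 2 / 2 ≤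
      π * ∫ ψ in (0:ℝ)..(2 * π), (X ψ * sin ψ - Y ψ * cos ψ) * ρ ψ) :
    ∃ r, 0 < r ∧ ∀ φ, ρ φ = r := by
  have hρ := h.contρ
  have hX := h.contX
  have hY := h.contY
  set H : ℝ → ℝ := fun φ => X φ * sin φ - Y φ * cos φ with hH
  set H1 : ℝ → ℝ := fun φ => X φ * cos φ + Y φ * sin φ with hH1
  have d1 : ∀ φ, HasDerivAt H (H1 φ) φ := fun φ => by
    have := ((h.dX φ).mul (hasDerivAt_sin φ)).sub ((h.dY φ).mul (hasDerivAt_cos φ))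
    refine this.congr_deriv ?_
    simp only [hH1]; ring
  have d2 : ∀ φ, HasDerivAt H1 (ρ φ - H φ) φ := fun φ => by
    have := ((h.dX φ).mul (hasDerivAt_cos φ)).add ((h.dY φ).mul (hasDerivAt_sin φ))
    refine this.congr_deriv ?_
    simp only [hH]; linear_combination ρ φ * (sin_sq_add_cos_sq φ)
  have cH : Continuous H := by fun_prop
  have cH1 : Continuous H1 := by fun_prop
  have pX := h.pX 0
  have pY := h.pY 0
  rw [zero_add] at pX pY
  have pH : H (2 * π) = H 0 := by simp [hH, pX, pY]
  have pH1 : H1 (2 * π) = H1 0 := by simp [hH1, pX, pY]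
  have k1 := ck_deriv d1 cH1 pH
  have k2 := ck_deriv d2 (hρ.sub cH) pH1
  have k3 : ∀ n : ℤ, ck ρ n = (1 - (n:ℂ) ^ 2) * ck H n := by
    intro n
    have e1 := k2 n
    rw [ck_sub hρ cH, k1] at e1
    linear_combination e1 + (n:ℂ) ^ 2 * ck H n * Complex.I_sq
  have P0 := ck_parseval cH
  have P1 := ck_parseval cH1
  have Pρ := ck_parseval hρ
  have int : ∫ ψ in (0:ℝ)..(2 * π), H ψ * ρ ψ =
      (∫ ψ in (0:ℝ)..(2 * π), H ψ ^ 2) - ∫ ψ in (0:ℝ)..(2 * π), H1 ψ ^ 2 := by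
    have e : ∫ ψ in (0:ℝ)..(2 * π), (H1 ψ * H1 ψ + H ψ * (ρ ψ - H ψ)) = 0 := by
      rw [intervalIntegral.integral_eq_sub_of_hasDerivAt (f := fun ψ => H ψ * H1 ψ)
        (fun x _ => (d1 x).mul (d2 x)) (Continuous.intervalIntegrable (by fun_prop) _ _), pH, pH1,
        sub_self]
    rw [← intervalIntegral.integral_sub (Continuous.intervalIntegrable (by fun_prop) _ _)
      (Continuous.intervalIntegrable (by fun_prop) _ _), ← sub_eq_zero,
      ← intervalIntegral.integral_sub (Continuous.intervalIntegrable (by fun_prop) _ _)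
      (Continuous.intervalIntegrable (by fun_prop) _ _), ← e]
    congr 1; funext ψ; ring
  have PD := (P1.sub P0)
  have e0 : ‖ck H 0‖ ^ 2 = ((2 * π)⁻¹ * ∫ x in (0:ℝ)..(2 * π), ρ x) ^ 2 := by
    have := k3 0
    simp only [Int.cast_zero, ne_eq, OfNat.ofNat_ne_zero, not_false_eq_true, zero_pow, sub_zero,
      one_mul] at this
    rw [← this, ck_zero, Complex.norm_real, norm_eq_abs, sq_abs]
  have term : ∀ n : ℤ, ‖ck H1 n‖ ^ 2 - ‖ck H n‖ ^ 2 = ((n:ℝ) ^ 2 - 1) * ‖ck H n‖ ^ 2 := by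
    intro n
    rw [k1]; simp only [norm_mul, Complex.norm_I, one_mul]
    rw [mul_pow, show ‖(n:ℂ)‖ ^ 2 = (n:ℝ) ^ 2 by
      rw [Complex.norm_intCast, sq_abs]]; ring
  simp_rw [term] at PD
  have PD2 := PD.update 0 0
  have nn : ∀ n, 0 ≤ Function.update (fun n : ℤ => ((n:ℝ) ^ 2 - 1) * ‖ck H n‖ ^ 2) 0 0 n := by
    intro n
    by_cases hn : n = 0
    · subst hn; simp
    · rw [Function.update_of_ne hn]
      apply mul_nonneg _ (by positivity)
      have : (1:ℤ) ≤ n ^ 2 := by have := sq_pos_of_ne_zero hn; omega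
      have : (1:ℝ) ≤ (n:ℝ) ^ 2 := by exact_mod_cast this
      linarith
  have hle : 0 - ((((0:ℤ):ℝ)) ^ 2 - 1) * ‖ck H 0‖ ^ 2 +
     ((2 * π)⁻¹ * (∫ x in (0:ℝ)..(2 * π), H1 x ^ 2) - (2 * π)⁻¹ * ∫ x in (0:ℝ)..(2 * π), H x ^ 2) ≤ 0 := by
    rw [e0]
    rw [int] at hI
    have hπ := pi_pos
    set L := ∫ φ in (0:ℝ)..(2 * π), ρ φ
    set a := ∫ φ in (0:ℝ)..(2 * π), H φ ^ 2
    set b := ∫ φ in (0:ℝ)..(2 * π), H1 φ ^ 2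
    have : 0 - ((((0:ℤ):ℝ)) ^ 2 - 1) * ((2 * π)⁻¹ * L) ^ 2 + ((2 * π)⁻¹ * b - (2 * π)⁻¹ * a)
      = (L ^ 2 / 2 - π * (a - b)) / (2 * π ^ 2) := by
      push_cast; field_simp; ring
    rw [this]
    apply div_nonpos_of_nonpos_of_nonneg (by linarith) (by positivity)
  have zero := (hasSum_zero_iff_of_nonneg nn).1 (by
    have h0 := PD2.nonneg nn
    have : _ = (0:ℝ) := le_antisymm hle h0
    rw [this] at PD2; exact PD2)
  have ckρ : ∀ n : ℤ, n ≠ 0 → ck ρ n = 0 := by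
    intro n hn
    have := congrFun zero n
    rw [Function.update_of_ne hn] at this
    rw [k3]
    rcases mul_eq_zero.1 this with h1 | h1
    · have h2 : (n:ℂ) ^ 2 - 1 = 0 := by exact_mod_cast congrArg (fun x : ℝ => (x : ℂ)) h1
      rw [show 1 - (n:ℂ) ^ 2 = 0 by linear_combination -h2, zero_mul]
    · have : ck H n = 0 := by simpa using h1
      rw [this, mul_zero]
  have Pρ2 := hasSum_single (f := fun n => ‖ck ρ n‖ ^ 2) 0 (fun n hn => by simp [ckρ n hn])
  have fin := Pρ.unique Pρ2
  simp only [ck_zero, Complex.norm_real, norm_eq_abs, sq_abs] at fin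
  set r := (2 * π)⁻¹ * ∫ x in (0:ℝ)..(2 * π), ρ x with hr
  have hπ := pi_pos
  have z : ∫ x in (0:ℝ)..(2 * π), (ρ x - r) ^ 2 = 0 := by
    have : ∀ x, (ρ x - r) ^ 2 = ρ x ^ 2 - (2 * r * ρ x - r ^ 2) := fun x => by ring
    simp_rw [this]
    rw [intervalIntegral.integral_sub (Continuous.intervalIntegrable (by fun_prop) _ _)
      (Continuous.intervalIntegrable (by fun_prop) _ _),
      intervalIntegral.integral_sub (Continuous.intervalIntegrable (by fun_prop) _ _)
      (Continuous.intervalIntegrable (by fun_prop) _ _), intervalIntegral.integral_const_mul]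
    have e1 : ∫ x in (0:ℝ)..(2 * π), ρ x = 2 * π * r := by rw [hr]; field_simp
    have e2 : ∫ x in (0:ℝ)..(2 * π), ρ x ^ 2 = 2 * π * r ^ 2 := by rw [← fin]; field_simp
    rw [e1, e2]; simp; ring
  have all : ∀ x ∈ Ico 0 (2 * π), ρ x = r := by
    intro x hx
    by_contra hne
    have : 0 < ∫ x in (0:ℝ)..(2 * π), (ρ x - r) ^ 2 := by
      apply intervalIntegral.integral_pos (by positivity) (Continuous.continuousOn (by fun_prop))
        (fun _ _ => sq_nonneg _) ⟨x, Ico_subset_Icc_self hx, by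
          have := sub_ne_zero.2 hne; positivity⟩
    linarith
  have all' : ∀ x, ρ x = r := by
    intro x
    obtain ⟨y, hy, e⟩ := Function.Periodic.exists_mem_Ico₀ (f := ρ) (c := 2 * π) h.per (by positivity) x
    rw [e]; exact all y hy
  exact ⟨r, by rw [← all' 0]; exact h.pos 0, all'⟩

lemma circle (h : AC ρ X Y) {r : ℝ} (hr : ∀ φ, ρ φ = r) :
    ∃ a b, ∀ φ, X φ = a + r * sin φ ∧ Y φ = b - r * cos φ := by
  refine ⟨X 0, Y 0 + r, fun φ => ⟨?_, ?_⟩⟩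
  · have := is_const_of_deriv_eq_zero (f := fun φ => X φ - r * sin φ)
      (fun φ => ((h.dX φ).sub ((hasDerivAt_sin φ).const_mul r)).differentiableAt)
      (fun φ => by
        have := ((h.dX φ).sub ((hasDerivAt_sin φ).const_mul r)).deriv
        rw [hr, sub_self] at this; exact this) φ 0
    simp at this; linarith
  · have := is_const_of_deriv_eq_zero (f := fun φ => Y φ + r * cos φ)
      (fun φ => ((h.dY φ).add ((hasDerivAt_cos φ).const_mul r)).differentiableAt)
      (fun φ => by
        have := ((h.dY φ).add ((hasDerivAt_cos φ).const_mul r)).deriv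
        rw [hr, mul_neg, add_neg_cancel] at this; exact this) φ 0
    simp at this; linarith

end AC
end SB


namespace SB
open Real Filter Topology MeasureTheory

lemma int_const {A : Type*} [TopologicalSpace A] [PreconnectedSpace A] {f : A → ℝ}
    (hf : Continuous f) (hi : ∀ a, ∃ k : ℤ, f a = k) (a b : A) : f a = f b := by
  wlog h : f a < f b generalizing a b
  · rcases lt_trichotomy (f a) (f b) with h1 | h1 | h1
    · exact this a b h1
    · exact h1
    · exact (this b a h1).symm
  exfalso
  obtain ⟨k, hk⟩ := hi a
  obtain ⟨m, hm⟩ := hi b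
  have hkm : k + 1 ≤ m := by rw [hk, hm] at h; exact_mod_cast h
  have hkm' : (k:ℝ) + 1 ≤ m := by exact_mod_cast hkm
  obtain ⟨c, hc⟩ := mem_range_of_exists_le_of_exists_ge hf (c := (k:ℝ) + 1 / 2)
    ⟨a, by linarith⟩ ⟨b, by linarith⟩
  obtain ⟨j, hj⟩ := hi c
  rw [hj] at hc
  have h2 : ((2 * j : ℤ) : ℝ) = ((2 * k + 1 : ℤ) : ℝ) := by push_cast; linarith
  have h3 : 2 * j = 2 * k + 1 := by exact_mod_cast h2
  omega

/-- mean velocity -/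
noncomputable def Iv (g : ℝ → ℂ) (s τ : ℝ) : ℂ := ∫ u in (0:ℝ)..1, g (s + u * τ)

lemma Iv_cont {g : ℝ → ℂ} (hg : Continuous g) : Continuous (fun x : ℝ × ℝ => Iv g x.1 x.2) := by
  unfold Iv
  apply intervalIntegral.continuous_parametric_intervalIntegral_of_continuous'
  simp only [Function.uncurry_def]; fun_prop

lemma Iv_mul {G g : ℝ → ℂ} (hg : Continuous g) (hd : ∀ t, HasDerivAt G (g t) t) (s τ : ℝ) :
    (τ : ℂ) * Iv g s τ = G (s + τ) - G s := by
  unfold Iv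
  rw [← intervalIntegral.integral_const_mul]
  have hD : ∀ u ∈ uIcc (0:ℝ) 1, HasDerivAt (fun u : ℝ => G (s + u * τ)) ((τ : ℂ) * g (s + u * τ)) u := by
    intro u _
    have h1 : HasDerivAt (fun u : ℝ => s + u * τ) τ u := by
      simpa using ((hasDerivAt_id u).mul_const τ).const_add s
    have := HasDerivAt.scomp u (hd (s + u * τ)) h1
    rw [Complex.real_smul] at this
    exact this
  rw [intervalIntegral.integral_eq_sub_of_hasDerivAt hD (Continuous.intervalIntegrable (by fun_prop) _ _)]
  simp

lemma Iv_rev (g : ℝ → ℂ) (s τ : ℝ) : Iv g (s + τ) (-τ) = Iv g s τ := by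
  unfold Iv
  have := intervalIntegral.integral_comp_sub_left (a := 0) (b := 1) (fun u => g (s + u * τ)) 1
  simp only [sub_self, sub_zero] at this
  rw [← this]
  congr 1; funext u; congr 1; ring

lemma umlauf {ℓ : ℝ} (hℓ : 0 < ℓ) {G g : ℝ → ℂ} (hg : Continuous g)
    (hd : ∀ t, HasDerivAt G (g t) t) (hp : ∀ t, G (t + ℓ) = G t) (hg0 : ∀ t, g t ≠ 0)
    (hinj : ∀ s τ, 0 < τ → τ < ℓ → G (s + τ) ≠ G s)
    (hbot : ∀ a, (∀ t, (G a).im ≤ (G t).im) → 0 < (g a).re)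
    {P : ℝ → ℂ} (hP : Continuous P) (hPe : ∀ t, Complex.exp (P t) = g t) (s : ℝ) :
    (P (s + ℓ)).im = (P s).im + 2 * π := by
  have hpg : ∀ t, g (t + ℓ) = g t := by
    intro t
    have h1 := (hd (t + ℓ)).comp_add_const t ℓ
    simp_rw [hp] at h1
    exact h1.unique (hd t)
  set E : ℝ → ℝ → ℂ := fun s τ => Iv g s τ - Iv g s (τ - ℓ) with hE
  have hEc : Continuous (fun x : ℝ × ℝ => E x.1 x.2) := by
    have h1 := Iv_cont hg
    have h2 : Continuous (fun x : ℝ × ℝ => Iv g x.1 (x.2 - ℓ)) :=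
      h1.comp (continuous_fst.prodMk (continuous_snd.sub continuous_const))
    exact h1.sub h2
  have hℓc : (ℓ : ℂ) ≠ 0 := by exact_mod_cast hℓ.ne'
  have I0 : ∀ s, Iv g s 0 = g s := fun s => by simp [Iv]
  have Iℓ : ∀ s, Iv g s ℓ = 0 := fun s => by
    have := Iv_mul hg hd s ℓ
    rw [hp, sub_self] at this
    exact (mul_eq_zero.1 this).resolve_left hℓc
  have Inℓ : ∀ s, Iv g s (-ℓ) = 0 := fun s => by
    rw [← Iℓ (s - ℓ), ← Iv_rev g (s - ℓ) ℓ, sub_add_cancel]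
  have E0 : ∀ s, E s 0 = g s := fun s => by simp [hE, I0, Inℓ]
  have Eℓ : ∀ s, E s ℓ = - g s := fun s => by simp [hE, I0, Iℓ]
  have ED : ∀ s τ, ((τ * (ℓ - τ) : ℝ) : ℂ) * E s τ = (ℓ : ℂ) * (G (s + τ) - G s) := by
    intro s τ
    have h1 := Iv_mul hg hd s τ
    have h2 := Iv_mul hg hd s (τ - ℓ)
    have h3 := hp (s + (τ - ℓ))
    rw [show s + (τ - ℓ) + ℓ = s + τ by ring] at h3
    rw [← h3] at h2
    simp only [hE]
    push_cast at *
    linear_combination (ℓ - τ : ℂ) * h1 + (τ : ℂ) * h2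
  have Ene : ∀ s τ, τ ∈ Icc 0 ℓ → E s τ ≠ 0 := by
    intro s τ hτ h0
    rcases eq_or_lt_of_le hτ.1 with h1 | h1
    · rw [← h1, E0] at h0; exact hg0 _ h0
    rcases eq_or_lt_of_le hτ.2 with h2 | h2
    · rw [h2, Eℓ, neg_eq_zero] at h0; exact hg0 _ h0
    have := ED s τ
    rw [h0, mul_zero] at this
    have h3 := (mul_eq_zero.1 this.symm).resolve_left hℓc
    exact hinj s τ h1 h2 (sub_eq_zero.1 h3)
  have Esym : ∀ s τ, E (s + τ) (ℓ - τ) = - E s τ := by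
    intro s τ
    simp only [hE]
    have h1 : Iv g (s + τ) (ℓ - τ - ℓ) = Iv g s τ := by
      rw [show ℓ - τ - ℓ = -τ by ring, Iv_rev]
    have h2 : Iv g (s + τ) (ℓ - τ) = Iv g s (τ - ℓ) := by
      rw [← Iv_rev g (s + τ) (ℓ - τ)]
      rw [show s + τ + (ℓ - τ) = s + ℓ by ring, neg_sub]
      unfold Iv
      congr 1; funext u
      rw [← hpg (s + u * (τ - ℓ))]; congr 1; ring
    rw [h1, h2]; ring
  set c : ℝ → ℝ := fun τ => max 0 (min τ ℓ) with hc
  have cc : Continuous c := by fun_prop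
  have cm : ∀ τ, c τ ∈ Icc 0 ℓ := fun τ => ⟨le_max_left _ _, max_le hℓ.le (min_le_right _ _)⟩
  have ce : ∀ τ ∈ Icc 0 ℓ, c τ = τ := fun τ h => by
    simp only [hc]; rw [min_eq_left h.2, max_eq_right h.1]
  have hsc : IsSimplyConnected (univ : Set (ℝ × ℝ)) := by
    haveI := Convex.contractibleSpace (convex_univ (𝕜 := ℝ) (E := ℝ × ℝ)) univ_nonempty
    exact SimplyConnectedSpace.ofContractible _
  obtain ⟨F, hF, hFe⟩ := Complex.exists_continuousOn_eqOn_exp_comp (X := ℝ × ℝ) (U := univ)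
    hsc isOpen_univ
    (g := fun x => E x.1 (c x.2))
    (hEc.comp (continuous_fst.prodMk (cc.comp continuous_snd))).continuousOn
    (by rintro ⟨x, -, hx⟩; exact Ene _ _ (cm _) hx)
  rw [continuousOn_univ] at hF
  have hFe' : ∀ s τ, Complex.exp (F (s, τ)) = E s (c τ) := fun s τ => hFe (mem_univ (s, τ))
  have c0 : c 0 = 0 := ce 0 ⟨le_rfl, hℓ.le⟩
  have cℓ : c ℓ = ℓ := ce ℓ ⟨hℓ.le, le_rfl⟩
  -- the symmetry constant
  set f : ℝ × ℝ → ℝ := fun x => (((F (x.1 + c x.2, ℓ - c x.2)).im - (F x).im) / π - 1) / 2 with hf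
  have fc : Continuous f := by fun_prop
  have fi : ∀ x, ∃ k : ℤ, f x = k := by
    intro x
    have h1 := hFe' (x.1 + c x.2) (ℓ - c x.2)
    have h2 := hFe' x.1 x.2
    rw [ce (ℓ - c x.2) ⟨by linarith [(cm x.2).2], by linarith [(cm x.2).1]⟩, Esym, ← h2] at h1
    have h3 : Complex.exp (F (x.1 + c x.2, ℓ - c x.2)) = Complex.exp (F (x.1, x.2) + π * Complex.I) := by
      rw [h1, Complex.exp_add, Complex.exp_pi_mul_I]; ring
    obtain ⟨n, hn⟩ := Complex.exp_eq_exp_iff_exists_int.1 h3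
    refine ⟨n, ?_⟩
    have := congrArg Complex.im hn
    simp at this
    simp only [hf, this]
    field_simp; ring
  obtain ⟨m, hm⟩ := fi (0, 0)
  have fm : ∀ x, (F (x.1 + c x.2, ℓ - c x.2)).im = (F x).im + π * (2 * m + 1) := by
    intro x
    have h1 := int_const fc fi x (0, 0)
    rw [hm] at h1
    simp only [hf] at h1
    have := pi_ne_zero
    field_simp at h1
    linarith
  have m1 : ∀ s, (F (s, ℓ)).im = (F (s, 0)).im + π * (2 * m + 1) := fun s => by
    simpa [c0] using fm (s, 0)
  have m2 : ∀ s, (F (s + ℓ, 0)).im = (F (s, ℓ)).im + π * (2 * m + 1) := fun s => by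
    simpa [cℓ] using fm (s, ℓ)
  -- bottom point
  have Gc : Continuous G := continuous_iff_continuousAt.2 fun t => (hd t).continuousAt
  obtain ⟨a, ha, hmin⟩ := (isCompact_Icc (a := 0) (b := ℓ)).exists_isMinOn
    (nonempty_Icc.2 hℓ.le) (Complex.continuous_im.comp Gc).continuousOn
  have hmin' : ∀ t, (G a).im ≤ (G t).im := by
    intro t
    obtain ⟨y, hy, e⟩ := Function.Periodic.exists_mem_Ico₀ (f := G) (c := ℓ) hp hℓ t
    rw [e]; exact hmin (Ico_subset_Icc_self hy)
  have ga0 := hbot a hmin'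
  have gai : (g a).im = 0 := by
    have hdi : HasDerivAt (fun t => (G t).im) (g a).im a := by
      have := (Complex.imCLM.hasFDerivAt.comp_hasDerivAt a (hd a))
      exact this
    exact IsLocalMin.hasDerivAt_eq_zero (Eventually.of_forall hmin') hdi
  have Eim : ∀ τ ∈ Icc 0 ℓ, 0 ≤ (E a τ).im := by
    intro τ hτ
    rcases eq_or_lt_of_le hτ.1 with h1 | h1
    · rw [← h1, E0, gai]
    rcases eq_or_lt_of_le hτ.2 with h2 | h2
    · rw [h2, Eℓ]; simp [gai]
    have := congrArg Complex.im (ED a τ)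
    rw [Complex.im_ofReal_mul, Complex.im_ofReal_mul, Complex.sub_im (G (a + τ)) (G a)] at this
    have h3 : 0 < τ * (ℓ - τ) := mul_pos h1 (by linarith)
    have h4 : 0 ≤ τ * (ℓ - τ) * (E a τ).im := by
      rw [this]; exact mul_nonneg hℓ.le (by linarith [hmin' (a + τ)])
    exact nonneg_of_mul_nonneg_right h4 h3
  have sinn : ∀ τ ∈ Icc 0 ℓ, 0 ≤ sin (F (a, τ)).im := by
    intro τ hτ
    have h1 := Eim τ hτ
    rw [← ce τ hτ, ← hFe', Complex.exp_im] at h1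
    exact nonneg_of_mul_nonneg_right h1 (exp_pos _)
  have st : sin (F (a, 0)).im = 0 ∧ 0 < cos (F (a, 0)).im := by
    have h1 := hFe' a 0
    rw [c0, E0] at h1
    have h2 := congrArg Complex.im h1
    have h3 := congrArg Complex.re h1
    rw [Complex.exp_im, gai] at h2
    rw [Complex.exp_re] at h3
    rw [← h3] at ga0
    exact ⟨(mul_eq_zero.1 h2).resolve_left (exp_pos _).ne', pos_of_mul_pos_right ga0 (exp_pos _).le⟩
  have cs1 : cos (F (a, 0)).im = 1 := by
    have := sin_sq_add_cos_sq (F (a, 0)).im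
    rw [st.1] at this
    nlinarith [st.2]
  have pc : ContinuousOn (fun τ => (F (a, τ)).im) (Icc 0 ℓ) := Continuous.continuousOn (by fun_prop)
  have hπ := pi_pos
  have m0 : m = 0 := by
    rcases lt_trichotomy m 0 with h | h | h
    · exfalso
      have h' : (m:ℝ) ≤ -1 := by exact_mod_cast (by omega : m ≤ -1)
      obtain ⟨τ, hτ, e⟩ := intermediate_value_Icc' hℓ.le pc
        (show (F (a, 0)).im - π / 2 ∈ Icc (F (a, ℓ)).im (F (a, 0)).im from
          ⟨by rw [m1]; nlinarith, by linarith⟩)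
      have := sinn τ hτ
      have e' : (F (a, τ)).im = _ := e
      rw [e', sin_sub_pi_div_two, cs1] at this; linarith
    · exact h
    · exfalso
      have h' : (1:ℝ) ≤ m := by exact_mod_cast (by omega : 1 ≤ m)
      obtain ⟨τ, hτ, e⟩ := intermediate_value_Icc hℓ.le pc
        (show (F (a, 0)).im + π + π / 2 ∈ Icc (F (a, 0)).im (F (a, ℓ)).im from
          ⟨by linarith, by rw [m1]; nlinarith⟩)
      have := sinn τ hτ
      have e' : (F (a, τ)).im = _ := e
      rw [e', sin_add_pi_div_two, cos_add_pi, cs1] at this; linarith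
  rw [m0] at m1 m2
  -- compare with `P`
  set q : ℝ → ℝ := fun t => ((P t).im - (F (t, 0)).im) / (2 * π) with hq
  have qc : Continuous q := by fun_prop
  have qi : ∀ t, ∃ k : ℤ, q t = k := by
    intro t
    have h1 := hFe' t 0
    rw [c0, E0, ← hPe] at h1
    obtain ⟨n, hn⟩ := Complex.exp_eq_exp_iff_exists_int.1 h1.symm
    refine ⟨n, ?_⟩
    have := congrArg Complex.im hn
    simp at this
    simp only [hq, this]
    field_simp; ring
  have h1 := int_const qc qi (s + ℓ) s
  simp only [hq] at h1
  rw [div_left_inj' (by positivity)] at h1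
  have h2 := m1 s
  have h3 := m2 s
  push_cast at h2 h3
  linarith

end SB


namespace SB
open Real Filter Topology MeasureTheory

/-- A closed curve with positive curvature, in coordinates. -/
structure Curve (ℓ : ℝ) (x y x1 y1 x2 y2 : ℝ → ℝ) : Prop where
  hℓ : 0 < ℓ
  dx : ∀ t, HasDerivAt x (x1 t) t
  dy : ∀ t, HasDerivAt y (y1 t) t
  dx1 : ∀ t, HasDerivAt x1 (x2 t) t
  dy1 : ∀ t, HasDerivAt y1 (y2 t) t
  dx2 : Differentiable ℝ x2
  dy2 : Differentiable ℝ y2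
  px : ∀ t, x (t + ℓ) = x t
  py : ∀ t, y (t + ℓ) = y t
  inj : ∀ s τ, 0 < τ → τ < ℓ → ¬ (x (s + τ) = x s ∧ y (s + τ) = y s)
  curv : ∀ t, 0 < x1 t * y2 t - x2 t * y1 t

/-- No conjugate points, in coordinates. -/
def NCt (x y x1 y1 x2 y2 : ℝ → ℝ) : Prop :=
  ∀ t : ℤ → ℝ, (∀ n, 0 < x1 (t n) * y1 (t (n + 1)) - x1 (t (n + 1)) * y1 (t n)) →
    (∀ n, x1 (t n) * (y (t (n + 1)) - y (t (n - 1)))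
      - (x (t (n + 1)) - x (t (n - 1))) * y1 (t n) = 0) →
    ∀ ξ : ℤ → ℝ, (∀ n, (x1 (t (n - 1)) * y1 (t n) - x1 (t n) * y1 (t (n - 1))) * ξ (n - 1)
      + ((x (t (n - 1)) * y2 (t n) - x2 (t n) * y (t (n - 1)))
        + (x2 (t n) * y (t (n + 1)) - x (t (n + 1)) * y2 (t n))) * ξ n
      + (x1 (t n) * y1 (t (n + 1)) - x1 (t (n + 1)) * y1 (t n)) * ξ (n + 1) = 0) →
    ξ ≠ 0 → ¬ ∃ M N : ℤ, M < N ∧ ξ M = 0 ∧ ξ N = 0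

namespace Curve
variable {ℓ : ℝ} {x y x1 y1 x2 y2 : ℝ → ℝ}

lemma px1 (h : Curve ℓ x y x1 y1 x2 y2) (t : ℝ) : x1 (t + ℓ) = x1 t := by
  have h1 := (h.dx (t + ℓ)).comp_add_const t ℓ
  simp_rw [h.px] at h1
  exact h1.unique (h.dx t)
lemma py1 (h : Curve ℓ x y x1 y1 x2 y2) (t : ℝ) : y1 (t + ℓ) = y1 t := by
  have h1 := (h.dy (t + ℓ)).comp_add_const t ℓ
  simp_rw [h.py] at h1
  exact h1.unique (h.dy t)
lemma px2 (h : Curve ℓ x y x1 y1 x2 y2) (t : ℝ) : x2 (t + ℓ) = x2 t := by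
  have h1 := (h.dx1 (t + ℓ)).comp_add_const t ℓ
  simp_rw [h.px1] at h1
  exact h1.unique (h.dx1 t)
lemma py2 (h : Curve ℓ x y x1 y1 x2 y2) (t : ℝ) : y2 (t + ℓ) = y2 t := by
  have h1 := (h.dy1 (t + ℓ)).comp_add_const t ℓ
  simp_rw [h.py1] at h1
  exact h1.unique (h.dy1 t)
lemma cx1 (h : Curve ℓ x y x1 y1 x2 y2) : Continuous x1 :=
  continuous_iff_continuousAt.2 fun t => (h.dx1 t).continuousAt
lemma cy1 (h : Curve ℓ x y x1 y1 x2 y2) : Continuous y1 :=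
  continuous_iff_continuousAt.2 fun t => (h.dy1 t).continuousAt

lemma sqpos (h : Curve ℓ x y x1 y1 x2 y2) (t : ℝ) : 0 < x1 t ^ 2 + y1 t ^ 2 := by
  have := h.curv t
  by_contra hc
  push Not at hc
  have e1 : x1 t = 0 := by nlinarith [sq_nonneg (x1 t), sq_nonneg (y1 t)]
  have e2 : y1 t = 0 := by nlinarith [sq_nonneg (x1 t), sq_nonneg (y1 t)]
  rw [e1, e2] at this; simp at this

lemma bot (h : Curve ℓ x y x1 y1 x2 y2) (a : ℝ) (ha : ∀ t, y a ≤ y t) : 0 < x1 a := by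
  have e1 : y1 a = 0 := IsLocalMin.hasDerivAt_eq_zero (Eventually.of_forall ha) (h.dy a)
  have hc := h.curv a
  rw [e1, mul_zero, sub_zero] at hc
  by_contra hx
  push Not at hx
  have hy2 : y2 a < 0 := by
    by_contra hy; push Not at hy
    nlinarith
  -- y2 < 0 near a, y1 has negative derivative
  have h1 : deriv (deriv (fun t => - y t)) a = - y2 a := by
    have : deriv (fun t => - y t) = fun t => - y1 t := funext fun t => (h.dy t).neg.deriv
    rw [this]; exact (h.dy1 a).neg.deriv
  have h0 : deriv (fun t => - y t) a = 0 := by rw [(h.dy a).fun_neg.deriv, e1, neg_zero]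
  -- y1 > 0 to the left, < 0 to the right => y t < y a
  have hs := hasDerivAt_iff_tendsto_slope.1 (h.dy1 a)
  have hev : ∀ᶠ t in 𝓝[≠] a, slope y1 a t < 0 := hs.eventually (gt_mem_nhds hy2)
  rw [eventually_nhdsWithin_iff, Metric.eventually_nhds_iff] at hev
  obtain ⟨ε, hε, H⟩ := hev
  have hneg : ∀ t ∈ Ioo a (a + ε), y1 t < 0 := by
    intro t ht
    have := H (y := t) (by rw [Real.dist_eq, abs_lt]; constructor <;> linarith [ht.1, ht.2]) (ne_of_gt ht.1)
    rw [slope_def_field, e1, sub_zero] at this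
    by_contra hh
    push Not at hh
    exact absurd this (not_lt.2 (div_nonneg hh (by linarith [ht.1])))
  obtain ⟨c, hc1, hc2⟩ := exists_hasDerivAt_eq_slope y y1 (show a < a + ε / 2 by linarith)
    (continuous_iff_continuousAt.2 fun t => (h.dy t).continuousAt).continuousOn (fun t _ => h.dy t)
  have h3 := hneg c ⟨hc1.1, by linarith [hc1.2]⟩
  rw [hc2] at h3
  have h4 : 0 ≤ (y (a + ε / 2) - y a) / (a + ε / 2 - a) :=
    div_nonneg (by linarith [ha (a + ε / 2)]) (by linarith)
  linarith

lemma angle (h : Curve ℓ x y x1 y1 x2 y2) : ∃ θ v κ : ℝ → ℝ,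
    (∀ t, 0 < v t) ∧ (∀ t, 0 < κ t) ∧ Differentiable ℝ v ∧ Differentiable ℝ κ ∧
    (∀ t, HasDerivAt θ (κ t) t) ∧ (∀ t, x1 t = v t * cos (θ t)) ∧ (∀ t, y1 t = v t * sin (θ t)) ∧
    (∀ t, κ t * v t ^ 2 = x1 t * y2 t - x2 t * y1 t) ∧
    (∀ t, θ (t + ℓ) = θ t + 2 * π) := by
  have key : ∀ (p q : ℝ → ℝ) (p' q' : ℝ) (t : ℝ), HasDerivAt p p' t → HasDerivAt q q' t →
      HasDerivAt (fun t => (⟨p t, q t⟩ : ℂ)) (⟨p', q'⟩ : ℂ) t := by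
    intro p q p' q' t h1 h2
    have h3 := h1.ofReal_comp.add (h2.ofReal_comp.mul_const Complex.I)
    have e : ∀ a b : ℝ, (⟨a, b⟩ : ℂ) = (a : ℂ) + (b : ℂ) * Complex.I := fun a b =>
      (Complex.mk_eq_add_mul_I a b)
    simp_rw [e]; exact h3
  set G : ℝ → ℂ := fun t => ⟨x t, y t⟩ with hG
  set g : ℝ → ℂ := fun t => ⟨x1 t, y1 t⟩ with hg
  set w : ℝ → ℂ := fun t => ⟨x2 t, y2 t⟩ with hw
  have dG : ∀ t, HasDerivAt G (g t) t := fun t => key _ _ _ _ t (h.dx t) (h.dy t)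
  have dg : ∀ t, HasDerivAt g (w t) t := fun t => key _ _ _ _ t (h.dx1 t) (h.dy1 t)
  have dw : Differentiable ℝ w := fun t =>
    (key _ _ _ _ t (h.dx2 t).hasDerivAt (h.dy2 t).hasDerivAt).differentiableAt
  have dgd : Differentiable ℝ g := fun t => (dg t).differentiableAt
  have g0 : ∀ t, g t ≠ 0 := by
    intro t h0
    have h1 := congrArg Complex.re h0
    have h2 := congrArg Complex.im h0
    simp only [hg, Complex.zero_re, Complex.zero_im] at h1 h2
    have := h.sqpos t
    rw [h1, h2] at this; simp at this
  have ck : Continuous (fun t => w t / g t) := dw.continuous.div dgd.continuous g0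
  set P : ℝ → ℂ := fun t => Complex.log (g 0) + ∫ s in (0:ℝ)..t, w s / g s with hP
  have dP : ∀ t, HasDerivAt P (w t / g t) t := fun t =>
    (intervalIntegral.integral_hasDerivAt_right (ck.intervalIntegrable _ _)
      (ck.stronglyMeasurableAtFilter _ _) ck.continuousAt).const_add _
  have hPe : ∀ t, Complex.exp (P t) = g t := by
    have hd : ∀ t, HasDerivAt (fun t => g t * Complex.exp (- P t)) 0 t := by
      intro t
      have h1 := (dg t).mul ((dP t).fun_neg.cexp)
      refine h1.congr_deriv ?_
      have := g0 t
      field_simp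
      ring
    intro t
    have h1 := is_const_of_deriv_eq_zero (fun t => (hd t).differentiableAt) (fun t => (hd t).deriv) t 0
    have h2 : P 0 = Complex.log (g 0) := by simp [hP]
    simp only [h2] at h1
    rw [Complex.exp_neg, Complex.exp_neg, Complex.exp_log (g0 0), mul_inv_cancel₀ (g0 0)] at h1
    have := Complex.exp_ne_zero (P t)
    field_simp at h1
    exact h1.symm
  have Pc : Continuous P := continuous_iff_continuousAt.2 fun t => (dP t).continuousAt
  have um := umlauf (G := G) (g := g) h.hℓ dgd.continuous dG
    (fun t => by simp only [hG, h.px, h.py]) g0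
    (fun s τ h1 h2 e => h.inj s τ h1 h2 ⟨congrArg Complex.re e, congrArg Complex.im e⟩)
    (fun a ha => h.bot a ha) Pc hPe
  have him : ∀ t, HasDerivAt (fun t => (P t).im) (w t / g t).im t := fun t =>
    Complex.imCLM.hasFDerivAt.comp_hasDerivAt t (dP t)
  have hre : ∀ t, HasDerivAt (fun t => (P t).re) (w t / g t).re t := fun t =>
    Complex.reCLM.hasFDerivAt.comp_hasDerivAt t (dP t)
  have hk : ∀ t, (w t / g t).im = (x1 t * y2 t - x2 t * y1 t) / (x1 t ^ 2 + y1 t ^ 2) := by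
    intro t
    rw [Complex.div_im, Complex.normSq_apply]
    simp only [hw, hg]
    have := (h.sqpos t).ne'
    rw [← sq, ← sq]
    field_simp
  refine ⟨fun t => (P t).im, fun t => Real.exp (P t).re,
    fun t => (x1 t * y2 t - x2 t * y1 t) / (x1 t ^ 2 + y1 t ^ 2), fun t => Real.exp_pos _,
    fun t => div_pos (h.curv t) (h.sqpos t), fun t => (hre t).exp.differentiableAt, ?_, ?_, ?_, ?_, ?_, um⟩
  · have d1 : Differentiable ℝ x1 := fun t => (h.dx1 t).differentiableAt
    have d2 : Differentiable ℝ y1 := fun t => (h.dy1 t).differentiableAt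
    exact ((d1.mul h.dy2).sub (h.dx2.mul d2)).div ((d1.pow 2).add (d2.pow 2)) (fun t => (h.sqpos t).ne')
  · intro t; exact (him t).congr_deriv (hk t)
  · intro t
    have := congrArg Complex.re (hPe t)
    rw [Complex.exp_re] at this; exact this.symm
  · intro t
    have := congrArg Complex.im (hPe t)
    rw [Complex.exp_im] at this; exact this.symm
  · intro t
    have h1 := congrArg Complex.re (hPe t)
    have h2 := congrArg Complex.im (hPe t)
    rw [Complex.exp_re] at h1
    rw [Complex.exp_im] at h2
    have h3 : x1 t ^ 2 + y1 t ^ 2 = Real.exp (P t).re ^ 2 := by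
      change _ = x1 t at h1
      change _ = y1 t at h2
      rw [← h1, ← h2]
      linear_combination Real.exp (P t).re ^ 2 * sin_sq_add_cos_sq (P t).im
    rw [← h3, div_mul_cancel₀ _ (h.sqpos t).ne']

end Curve
end SB


namespace SB
open Real Filter Topology MeasureTheory

lemma Curve.circle_of {ℓ : ℝ} {x y x1 y1 x2 y2 : ℝ → ℝ} (h : Curve ℓ x y x1 y1 x2 y2)
    (hnc : NCt x y x1 y1 x2 y2)
    (hA : ∫ t in (0:ℝ)..ℓ, (x1 t ^ 2 - y1 t ^ 2) / √(x1 t ^ 2 + y1 t ^ 2) = 0)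
    (hB : ∫ t in (0:ℝ)..ℓ, x1 t * y1 t / √(x1 t ^ 2 + y1 t ^ 2) = 0) :
    ∃ a b r : ℝ, 0 < r ∧ (∀ t, ∃ φ, x t = a + r * sin φ ∧ y t = b - r * cos φ) ∧
      (∀ φ, ∃ t, x t = a + r * sin φ ∧ y t = b - r * cos φ) := by
  obtain ⟨θ, v, κ, hv, hκ, dv, dκ, dθ, hx1, hy1, hcur, hθ⟩ := h.angle
  have hℓ := h.hℓ
  have hπ := pi_pos
  have hmono : StrictMono θ := strictMono_of_hasDerivAt_pos dθ hκ
  have cθ : Continuous θ := continuous_iff_continuousAt.2 fun t => (dθ t).continuousAt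
  have hper : Function.Periodic (fun t => θ t - 2 * π / ℓ * t) ℓ := by
    intro t
    simp only [hθ]
    field_simp
    ring
  have hθn : ∀ n : ℤ, θ (n * ℓ) = θ 0 + 2 * π * n := by
    intro n
    have := hper.int_mul_eq n
    have e : 2 * π / ℓ * (n * ℓ) = 2 * π * n := by field_simp
    simp only [e, mul_zero] at this
    linarith
  have hsurj : Function.Surjective θ := by
    intro φ
    apply mem_range_of_exists_le_of_exists_ge cθ
    · refine ⟨(⌊(φ - θ 0) / (2 * π)⌋ : ℤ) * ℓ, ?_⟩
      rw [hθn]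
      have := Int.floor_le ((φ - θ 0) / (2 * π))
      rw [le_div_iff₀ (by positivity)] at this
      linarith
    · refine ⟨(⌈(φ - θ 0) / (2 * π)⌉ : ℤ) * ℓ, ?_⟩
      rw [hθn]
      have := Int.le_ceil ((φ - θ 0) / (2 * π))
      rw [div_le_iff₀ (by positivity)] at this
      linarith
  set e := hmono.orderIsoOfSurjective θ hsurj with he
  set τ : ℝ → ℝ := fun φ => e.symm φ with hτ
  have θτ : ∀ φ, θ (τ φ) = φ := fun φ => e.apply_symm_apply φ
  have cτ : Continuous τ := e.symm.continuous
  have dτ : ∀ φ, HasDerivAt τ (κ (τ φ))⁻¹ φ := fun φ =>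
    HasDerivAt.of_local_left_inverse cτ.continuousAt (dθ (τ φ)) (hκ _).ne' (Eventually.of_forall θτ)
  have τper : ∀ φ, τ (φ + 2 * π) = τ φ + ℓ := fun φ => hmono.injective (by rw [hθ, θτ, θτ])
  have τd : Differentiable ℝ τ := fun φ => (dτ φ).differentiableAt
  set ρ : ℝ → ℝ := fun φ => v (τ φ) / κ (τ φ) with hρ
  have hvs : ∀ t, √(x1 t ^ 2 + y1 t ^ 2) = v t := by
    intro t
    rw [hx1, hy1, show (v t * cos (θ t)) ^ 2 + (v t * sin (θ t)) ^ 2 = v t ^ 2 by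
      linear_combination v t ^ 2 * sin_sq_add_cos_sq (θ t), sqrt_sq (hv t).le]
  have vper : ∀ t, v (t + ℓ) = v t := by
    intro t; rw [← hvs, ← hvs, h.px1, h.py1]
  have κper : ∀ t, κ (t + ℓ) = κ t := by
    intro t
    have h1 := (dθ (t + ℓ)).comp_add_const t ℓ
    simp_rw [hθ] at h1
    exact h1.unique ((dθ t).add_const _)
  have hac : AC ρ (fun φ => x (τ φ)) (fun φ => y (τ φ)) := by
    refine ⟨fun φ => div_pos (hv _) (hκ _), ?_, ?_, ?_, ?_, ?_, ?_⟩
    · exact (dv.comp τd).div (dκ.comp τd) (fun φ => (hκ _).ne')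
    · intro φ; simp only [hρ, τper, vper, κper]
    · intro φ
      refine ((h.dx (τ φ)).comp φ (dτ φ)).congr_deriv ?_
      rw [hx1, θτ]; simp only [hρ]; field_simp
    · intro φ
      refine ((h.dy (τ φ)).comp φ (dτ φ)).congr_deriv ?_
      rw [hy1, θτ]; simp only [hρ]; field_simp
    · intro φ; simp only [τper, h.px]
    · intro φ; simp only [τper, h.py]
  have hNC : NC ρ (fun φ => x (τ φ)) (fun φ => y (τ φ)) := by
    intro φ hφ1 hφ2 ζ hζ hζ0
    have hsin : ∀ m n : ℤ, x1 (τ (φ m)) * y1 (τ (φ n)) - x1 (τ (φ n)) * y1 (τ (φ m))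
        = v (τ (φ m)) * v (τ (φ n)) * sin (φ n - φ m) := by
      intro m n
      rw [hx1, hy1, hx1, hy1, θτ, θτ, sin_sub]; ring
    have hnc' := hnc (fun n => τ (φ n)) ?_ ?_ (fun n => ζ n / v (τ (φ n))) ?_ ?_
    · rintro ⟨M, N, hMN, h1, h2⟩
      exact hnc' ⟨M, N, hMN, by simp [h1], by simp [h2]⟩
    · intro n
      rw [hsin]
      exact mul_pos (mul_pos (hv _) (hv _)) (hφ1 n)
    · intro n
      have := hφ2 n
      simp only [ht] at this
      rw [hx1, hy1, θτ]
      linear_combination v (τ (φ n)) * this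
    · intro n
      have e1 := hφ2 n
      have e2 := hζ n
      rw [hsin, hsin]
      have ec := hcur (τ (φ n))
      rw [hx1, hy1, θτ] at ec
      simp only [ht, lg, hρ] at e1 e2
      have v0 := (hv (τ (φ n))).ne'
      have v1 := (hv (τ (φ (n - 1)))).ne'
      have v2 := (hv (τ (φ (n + 1)))).ne'
      have k0 := (hκ (τ (φ n))).ne'
      have hs := sin_sq_add_cos_sq (φ n)
      have hmid : (x (τ (φ (n - 1))) * y2 (τ (φ n)) - x2 (τ (φ n)) * y (τ (φ (n - 1))))
        + (x2 (τ (φ n)) * y (τ (φ (n + 1))) - x (τ (φ (n + 1))) * y2 (τ (φ n)))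
        = - (v (τ (φ n)) * κ (τ (φ n))) * (cos (φ n) * x (τ (φ (n + 1))) + sin (φ n) * y (τ (φ (n + 1)))
          - (cos (φ n) * x (τ (φ (n - 1))) + sin (φ n) * y (τ (φ (n - 1))))) := by
        generalize x (τ (φ (n + 1))) = xa at *
        generalize x (τ (φ (n - 1))) = xb at *
        generalize y (τ (φ (n + 1))) = ya at *
        generalize y (τ (φ (n - 1))) = yb at *
        generalize x2 (τ (φ n)) = p at *
        generalize y2 (τ (φ n)) = q at *
        generalize v (τ (φ n)) = V at *
        generalize κ (τ (φ n)) = K at *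
        generalize cos (φ n) = c at *
        generalize sin (φ n) = s at *
        have ec' : K * V = c * q - p * s := by
          apply mul_left_cancel₀ v0; linear_combination ec
        have f1 : xa - xb = c * (c * xa + s * ya - (c * xb + s * yb)) := by
          linear_combination (-(xa - xb)) * hs - s * e1
        have f2 : ya - yb = s * (c * xa + s * ya - (c * xb + s * yb)) := by
          linear_combination (-(ya - yb)) * hs + c * e1
        linear_combination p * f2 - q * f1 + (c * xa + s * ya - (c * xb + s * yb)) * ec'
      rw [hmid]
      field_simp
      field_simp at e2
      linear_combination e2
    · intro h0
      apply hζ0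
      funext n
      have := congrFun h0 n
      simp only [Pi.zero_apply, div_eq_zero_iff, (hv (τ (φ n))).ne', or_false] at this
      exact this
  have hsub : ∀ f : ℝ → ℝ, Continuous f → (∀ t, f (t + ℓ) = f t) →
      ∫ φ in (0:ℝ)..(2 * π), f (τ φ) * (κ (τ φ))⁻¹ = ∫ t in (0:ℝ)..ℓ, f t := by
    intro f hf hp
    have h1 := intervalIntegral.integral_comp_mul_deriv (a := 0) (b := 2 * π) (f := τ)
      (f' := fun φ => (κ (τ φ))⁻¹) (g := f) (fun φ _ => dτ φ)
      (Continuous.continuousOn ((dκ.continuous.comp cτ).inv₀ fun φ => (hκ _).ne')) hf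
    simp only [Function.comp] at h1
    rw [h1]
    have h2 := τper 0
    rw [zero_add] at h2
    rw [h2]
    have h3 := Function.Periodic.intervalIntegral_add_eq (f := f) (T := ℓ) hp (τ 0) 0
    rw [h3, zero_add]
  have hC : ∫ φ in (0:ℝ)..(2 * π), ρ φ * cos (2 * φ) = 0 := by
    have key := hsub (fun t => (x1 t ^ 2 - y1 t ^ 2) / √(x1 t ^ 2 + y1 t ^ 2)) ?_ ?_
    · refine Eq.trans ?_ (key.trans hA)
      congr 1; funext φ
      rw [hvs, hx1, hy1, θτ, cos_two_mul]
      simp only [hρ]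
      have := (hv (τ φ)).ne'
      have := (hκ (τ φ)).ne'
      field_simp
      linear_combination sin_sq_add_cos_sq φ
    · exact ((h.cx1.pow 2).sub (h.cy1.pow 2)).div (by simp_rw [hvs]; exact dv.continuous) (fun t => by rw [hvs]; exact (hv t).ne')
    · intro t; simp only [h.px1, h.py1]
  have hS : ∫ φ in (0:ℝ)..(2 * π), ρ φ * sin (2 * φ) = 0 := by
    have key := hsub (fun t => x1 t * y1 t / √(x1 t ^ 2 + y1 t ^ 2)) ?_ ?_
    · have key2 := key.trans hB
      have : ∫ φ in (0:ℝ)..(2 * π), 2 * (x1 (τ φ) * y1 (τ φ) / √(x1 (τ φ) ^ 2 + y1 (τ φ) ^ 2) * (κ (τ φ))⁻¹) = 0 := by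
        rw [intervalIntegral.integral_const_mul, key2, mul_zero]
      refine Eq.trans ?_ this
      congr 1; funext φ
      rw [hvs, hx1, hy1, θτ, sin_two_mul]
      simp only [hρ]
      have := (hv (τ φ)).ne'
      have := (hκ (τ φ)).ne'
      field_simp
    · exact (h.cx1.mul h.cy1).div (by simp_rw [hvs]; exact dv.continuous) (fun t => by rw [hvs]; exact (hv t).ne')
    · intro t; simp only [h.px1, h.py1]
  have hI := hac.hopf_ineq hC hS (hac.hQ hNC)
  obtain ⟨r, hr, hrc⟩ := hac.rho_const hI
  obtain ⟨a, b, hab⟩ := hac.circle hrc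
  refine ⟨a, b, r, hr, fun t => ⟨θ t, ?_⟩, fun φ => ⟨τ φ, hab φ⟩⟩
  have := hab (θ t)
  rwa [show τ (θ t) = t from hmono.injective (θτ _)] at this

end SB


namespace SB
open Real Filter Topology MeasureTheory

lemma sqrt_tangent {A B : ℝ} (hA : 0 < A) (h : 0 ≤ A + B) : √(A + B) ≤ √A + B / (2 * √A) := by
  have h1 := sqrt_pos.2 hA
  have h2 := sq_sqrt hA.le
  have h3 := sq_sqrt h
  rw [← sub_nonneg]
  have : √A + B / (2 * √A) - √(A + B) = (√(A + B) - √A) ^ 2 / (2 * √A) := by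
    field_simp
    linear_combination - h3 + h2
  rw [this]; positivity

lemma first_var {ℓ : ℝ} (hℓ : 0 < ℓ) {p q u z : ℝ → ℝ} (hp : Continuous p) (hq : Continuous q)
    (hu : Continuous u) (hz : Continuous z) (hpos : ∀ t, 0 < p t ^ 2 + q t ^ 2)
    (hmin : ∀ s : ℝ, ∫ t in (0:ℝ)..ℓ, √(p t ^ 2 + q t ^ 2) ≤
      ∫ t in (0:ℝ)..ℓ, √((p t + s * u t) ^ 2 + (q t + s * z t) ^ 2)) :
    ∫ t in (0:ℝ)..ℓ, (p t * u t + q t * z t) / √(p t ^ 2 + q t ^ 2) = 0 := by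
  have hne : ∀ t, √(p t ^ 2 + q t ^ 2) ≠ 0 := fun t => (sqrt_pos.2 (hpos t)).ne'
  have c0 : Continuous (fun t => √(p t ^ 2 + q t ^ 2)) := by fun_prop
  have c1 : Continuous (fun t => (p t * u t + q t * z t) / √(p t ^ 2 + q t ^ 2)) :=
    Continuous.div (by fun_prop) c0 hne
  have c2 : Continuous (fun t => (u t ^ 2 + z t ^ 2) / (2 * √(p t ^ 2 + q t ^ 2))) :=
    Continuous.div (by fun_prop) (by fun_prop) (fun t => mul_ne_zero two_ne_zero (hne t))
  set A := ∫ t in (0:ℝ)..ℓ, (p t * u t + q t * z t) / √(p t ^ 2 + q t ^ 2) with hA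
  set B := ∫ t in (0:ℝ)..ℓ, (u t ^ 2 + z t ^ 2) / (2 * √(p t ^ 2 + q t ^ 2)) with hB
  have key : ∀ s : ℝ, 0 ≤ s * A + s ^ 2 * B := by
    intro s
    have h1 : ∫ t in (0:ℝ)..ℓ, √((p t + s * u t) ^ 2 + (q t + s * z t) ^ 2) ≤
        ∫ t in (0:ℝ)..ℓ, (√(p t ^ 2 + q t ^ 2) + s * ((p t * u t + q t * z t) / √(p t ^ 2 + q t ^ 2))
          + s ^ 2 * ((u t ^ 2 + z t ^ 2) / (2 * √(p t ^ 2 + q t ^ 2)))) := by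
      apply intervalIntegral.integral_mono_on hℓ.le
      · exact Continuous.intervalIntegrable (by fun_prop) _ _
      · exact Continuous.intervalIntegrable ((c0.add (c1.const_mul s)).add (c2.const_mul _)) _ _
      · intro t _
        have h2 := sqrt_tangent (hpos t) (B := 2 * s * (p t * u t + q t * z t) + s ^ 2 * (u t ^ 2 + z t ^ 2))
          (by nlinarith [sq_nonneg (p t + s * u t), sq_nonneg (q t + s * z t)])
        have e : p t ^ 2 + q t ^ 2 + (2 * s * (p t * u t + q t * z t) + s ^ 2 * (u t ^ 2 + z t ^ 2))
          = (p t + s * u t) ^ 2 + (q t + s * z t) ^ 2 := by ring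
        rw [e] at h2
        refine h2.trans (le_of_eq ?_)
        have := hne t
        field_simp
        ring
    have c01 : Continuous (fun t => √(p t ^ 2 + q t ^ 2)
        + s * ((p t * u t + q t * z t) / √(p t ^ 2 + q t ^ 2))) := c0.add (c1.const_mul s)
    rw [intervalIntegral.integral_add (c01.intervalIntegrable _ _)
        (Continuous.intervalIntegrable (c2.const_mul _) _ _),
      intervalIntegral.integral_add (c0.intervalIntegrable _ _)
        (Continuous.intervalIntegrable (c1.const_mul s) _ _),
      intervalIntegral.integral_const_mul, intervalIntegral.integral_const_mul] at h1
    have := hmin s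
    linarith
  have hB0 : 0 ≤ B := by have h1 := key 1; have h2 := key (-1); linarith
  by_contra hne0
  have h1 := key (-A / (B + 1))
  have : -A / (B + 1) * A + (-A / (B + 1)) ^ 2 * B = - (A / (B + 1)) ^ 2 := by
    have : B + 1 ≠ 0 := by linarith
    field_simp; ring
  rw [this] at h1
  have : 0 < (A / (B + 1)) ^ 2 := by
    have : A / (B + 1) ≠ 0 := div_ne_zero hne0 (by linarith)
    positivity
  linarith

/-- length of the transformed curve -/
noncomputable def Ln (ℓ : ℝ) (p q : ℝ → ℝ) (m : ℝ × ℝ × ℝ × ℝ) : ℝ :=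
  ∫ t in (0:ℝ)..ℓ, √((m.1 * p t + m.2.1 * q t) ^ 2 + (m.2.2.1 * p t + m.2.2.2 * q t) ^ 2)

lemma Ln_cont {ℓ : ℝ} {p q : ℝ → ℝ} (hp : Continuous p) (hq : Continuous q) : Continuous (Ln ℓ p q) := by
  unfold Ln
  apply intervalIntegral.continuous_parametric_intervalIntegral_of_continuous'
  simp only [Function.uncurry_def]; fun_prop

lemma Ln_smul {ℓ : ℝ} {p q : ℝ → ℝ} (r : ℝ) (hr : 0 ≤ r) (m : ℝ × ℝ × ℝ × ℝ) :
    Ln ℓ p q (r • m) = r * Ln ℓ p q m := by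
  unfold Ln
  rw [← intervalIntegral.integral_const_mul]
  congr 1; funext t
  simp only [Prod.smul_fst, Prod.smul_snd, smul_eq_mul]
  rw [show (r * m.1 * p t + r * m.2.1 * q t) ^ 2 + (r * m.2.2.1 * p t + r * m.2.2.2 * q t) ^ 2
    = r ^ 2 * ((m.1 * p t + m.2.1 * q t) ^ 2 + (m.2.2.1 * p t + m.2.2.2 * q t) ^ 2) by ring,
    sqrt_mul (sq_nonneg r), sqrt_sq hr]

lemma Ln_min {ℓ : ℝ} {p q : ℝ → ℝ} (hp : Continuous p) (hq : Continuous q)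
    (hpos : ∀ m, m ≠ 0 → 0 < Ln ℓ p q m) :
    ∃ m : ℝ × ℝ × ℝ × ℝ, m.1 * m.2.2.2 - m.2.1 * m.2.2.1 = 1 ∧
      ∀ n : ℝ × ℝ × ℝ × ℝ, n.1 * n.2.2.2 - n.2.1 * n.2.2.1 = 1 → Ln ℓ p q m ≤ Ln ℓ p q n := by
  have hc := Ln_cont (ℓ := ℓ) hp hq
  obtain ⟨m0, hm0, hmin⟩ := (isCompact_sphere (0 : ℝ × ℝ × ℝ × ℝ) 1).exists_isMinOn
    (NormedSpace.sphere_nonempty.2 zero_le_one) hc.continuousOn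
  have hm0n : m0 ≠ 0 := by
    rintro rfl; simp at hm0
  have hk := hpos m0 hm0n
  set k := Ln ℓ p q m0 with hkdef
  have hlow : ∀ m, k * ‖m‖ ≤ Ln ℓ p q m := by
    intro m
    by_cases h0 : m = 0
    · subst h0
      have : Ln ℓ p q 0 = 0 := by simpa using Ln_smul (ℓ := ℓ) (p := p) (q := q) 0 le_rfl 0
      simp [this]
    have hn : 0 < ‖m‖ := norm_pos_iff.2 h0
    have h1 : k ≤ Ln ℓ p q (‖m‖⁻¹ • m) := hmin (by
      simp only [mem_sphere_iff_norm, sub_zero]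
      rw [norm_smul, norm_inv, norm_norm, inv_mul_cancel₀ hn.ne'])
    rw [Ln_smul _ (inv_nonneg.2 hn.le), inv_mul_eq_div, le_div_iff₀ hn] at h1
    exact h1
  have hcl : IsClosed {m : ℝ × ℝ × ℝ × ℝ | m.1 * m.2.2.2 - m.2.1 * m.2.2.1 = 1} :=
    isClosed_eq (by fun_prop) continuous_const
  have hx0 : ((1:ℝ), (0:ℝ), (0:ℝ), (1:ℝ)) ∈ {m : ℝ × ℝ × ℝ × ℝ | m.1 * m.2.2.2 - m.2.1 * m.2.2.1 = 1} := by
    simp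
  obtain ⟨m, hm, hmm⟩ := hc.continuousOn.exists_isMinOn' hcl hx0 (by
    apply Filter.Eventually.filter_mono inf_le_left
    have := (tendsto_norm_cocompact_atTop (E := ℝ × ℝ × ℝ × ℝ)).eventually_ge_atTop
      (Ln ℓ p q (1, 0, 0, 1) / k)
    filter_upwards [this] with n hn
    rw [div_le_iff₀ hk] at hn
    linarith [hlow n])
  exact ⟨m, hm, fun n hn => hmm hn⟩

lemma Curve.Ln_pos {ℓ : ℝ} {x y x1 y1 x2 y2 : ℝ → ℝ} (h : Curve ℓ x y x1 y1 x2 y2)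
    (m : ℝ × ℝ × ℝ × ℝ) (hm : m ≠ 0) : 0 < Ln ℓ x1 y1 m := by
  have row : ∀ a b : ℝ, (∀ t ∈ Ioo 0 ℓ, a * x1 t + b * y1 t = 0) → a = 0 ∧ b = 0 := by
    intro a b hab
    have hmem : ℓ / 2 ∈ Ioo 0 ℓ := ⟨by linarith [h.hℓ], by linarith [h.hℓ]⟩
    have d1 := ((h.dx1 (ℓ / 2)).const_mul a).add ((h.dy1 (ℓ / 2)).const_mul b)
    have ev : (fun _ => (0:ℝ)) =ᶠ[𝓝 (ℓ / 2)] (fun t => a * x1 t + b * y1 t) := by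
      filter_upwards [isOpen_Ioo.mem_nhds hmem] with t ht
      exact (hab t ht).symm
    have d2 := (d1.congr_of_eventuallyEq ev).unique (hasDerivAt_const _ _)
    have d3 := hab _ hmem
    have hc := h.curv (ℓ / 2)
    constructor
    · have : a * (x1 (ℓ / 2) * y2 (ℓ / 2) - x2 (ℓ / 2) * y1 (ℓ / 2)) = 0 := by
        linear_combination y2 (ℓ / 2) * d3 - y1 (ℓ / 2) * d2
      exact (mul_eq_zero.1 this).resolve_right hc.ne'
    · have : b * (x1 (ℓ / 2) * y2 (ℓ / 2) - x2 (ℓ / 2) * y1 (ℓ / 2)) = 0 := by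
        linear_combination x1 (ℓ / 2) * d2 - x2 (ℓ / 2) * d3
      exact (mul_eq_zero.1 this).resolve_right hc.ne'
  have hc1 := h.cx1
  have hc2 := h.cy1
  obtain ⟨t, ht, hne⟩ : ∃ t ∈ Ioo 0 ℓ, (m.1 * x1 t + m.2.1 * y1 t) ^ 2 + (m.2.2.1 * x1 t + m.2.2.2 * y1 t) ^ 2 ≠ 0 := by
    by_contra hcon
    push Not at hcon
    have r1 := row m.1 m.2.1 (fun t ht => by
      have := hcon t ht
      nlinarith [sq_nonneg (m.1 * x1 t + m.2.1 * y1 t), sq_nonneg (m.2.2.1 * x1 t + m.2.2.2 * y1 t)])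
    have r2 := row m.2.2.1 m.2.2.2 (fun t ht => by
      have := hcon t ht
      nlinarith [sq_nonneg (m.1 * x1 t + m.2.1 * y1 t), sq_nonneg (m.2.2.1 * x1 t + m.2.2.2 * y1 t)])
    exact hm (by ext <;> simp [r1, r2])
  unfold Ln
  apply intervalIntegral.integral_pos h.hℓ (Continuous.continuousOn (by fun_prop))
  · intro t _; positivity
  · exact ⟨t, Ioo_subset_Icc_self ht, sqrt_pos.2 (lt_of_le_of_ne (by positivity) hne.symm)⟩

/-- `SL₂` images of curves. -/
lemma Curve.map {ℓ : ℝ} {x y x1 y1 x2 y2 : ℝ → ℝ} (h : Curve ℓ x y x1 y1 x2 y2)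
    {a b c d : ℝ} (hd : a * d - b * c = 1) :
    Curve ℓ (fun t => a * x t + b * y t) (fun t => c * x t + d * y t)
      (fun t => a * x1 t + b * y1 t) (fun t => c * x1 t + d * y1 t)
      (fun t => a * x2 t + b * y2 t) (fun t => c * x2 t + d * y2 t) := by
  refine ⟨h.hℓ, fun t => ((h.dx t).const_mul a).add ((h.dy t).const_mul b),
    fun t => ((h.dx t).const_mul c).add ((h.dy t).const_mul d),
    fun t => ((h.dx1 t).const_mul a).add ((h.dy1 t).const_mul b),
    fun t => ((h.dx1 t).const_mul c).add ((h.dy1 t).const_mul d),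
    (h.dx2.const_mul a).add (h.dy2.const_mul b), (h.dx2.const_mul c).add (h.dy2.const_mul d),
    fun t => by simp only [h.px, h.py], fun t => by simp only [h.px, h.py], ?_, ?_⟩
  · rintro s τ h1 h2 ⟨e1, e2⟩
    refine h.inj s τ h1 h2 ⟨?_, ?_⟩
    · linear_combination d * e1 - b * e2 + (x s - x (s + τ)) * hd
    · linear_combination a * e2 - c * e1 + (y s - y (s + τ)) * hd
  · intro t
    have := h.curv t
    have e : (a * x1 t + b * y1 t) * (c * x2 t + d * y2 t) - (a * x2 t + b * y2 t) * (c * x1 t + d * y1 t)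
      = x1 t * y2 t - x2 t * y1 t := by linear_combination (x1 t * y2 t - x2 t * y1 t) * hd
    rw [e]; exact this

lemma NCt.map {x y x1 y1 x2 y2 : ℝ → ℝ} (h : NCt x y x1 y1 x2 y2)
    {a b c d : ℝ} (hd : a * d - b * c = 1) :
    NCt (fun t => a * x t + b * y t) (fun t => c * x t + d * y t)
      (fun t => a * x1 t + b * y1 t) (fun t => c * x1 t + d * y1 t)
      (fun t => a * x2 t + b * y2 t) (fun t => c * x2 t + d * y2 t) := by
  have inv : ∀ p q r s : ℝ, (a * p + b * q) * (c * r + d * s) - (a * r + b * s) * (c * p + d * q)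
      = p * s - r * q := by
    intro p q r s; linear_combination (p * s - r * q) * hd
  intro t h1 h2 ξ h3
  refine h t ?_ ?_ ξ ?_
  · intro n; have := h1 n; simp only [inv] at this; exact this
  · intro n
    have := h2 n
    simp only at this
    rw [← inv (x1 (t n)) (y1 (t n))]
    linear_combination this
  · intro n
    have := h3 n
    simp only [inv] at this
    exact this

lemma Curve.ellipse {ℓ : ℝ} {x y x1 y1 x2 y2 : ℝ → ℝ} (h : Curve ℓ x y x1 y1 x2 y2)
    (hnc : NCt x y x1 y1 x2 y2) :
    ∃ a b c d p q r : ℝ, a * d - b * c = 1 ∧ 0 < r ∧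
      (∀ t, ∃ φ, a * x t + b * y t = p + r * sin φ ∧ c * x t + d * y t = q - r * cos φ) ∧
      (∀ φ, ∃ t, a * x t + b * y t = p + r * sin φ ∧ c * x t + d * y t = q - r * cos φ) := by
  obtain ⟨⟨a, b, c, d⟩, hd, hmin⟩ := Ln_min h.cx1 h.cy1 h.Ln_pos
  simp only at hd
  have h' := h.map hd
  have cp := h'.cx1
  have cq := h'.cy1
  have hB := first_var (u := fun t => c * x1 t + d * y1 t) (z := fun _ => 0) h.hℓ cp cq cq
    continuous_const h'.sqpos (by
      intro s
      have := hmin (a + s * c, b + s * d, c, d) (by simp only; linear_combination hd)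
      unfold Ln at this
      refine this.trans (le_of_eq ?_)
      congr 1; funext t; congr 1; ring)
  have hA := first_var (u := fun t => (a * x1 t + b * y1 t) - (c * x1 t + d * y1 t))
    (z := fun t => (a * x1 t + b * y1 t) - (c * x1 t + d * y1 t)) h.hℓ cp cq (cp.sub cq)
    (cp.sub cq) h'.sqpos (by
      intro s
      have := hmin (a + s * (a - c), b + s * (b - d), c + s * (a - c), d + s * (b - d))
        (by simp only; linear_combination hd)
      unfold Ln at this
      refine this.trans (le_of_eq ?_)
      congr 1; funext t; congr 1; ring)
  obtain ⟨p, q, r, hr, h1, h2⟩ := h'.circle_of (hnc.map hd)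
    (by rw [← hA]; congr 1; funext t; congr 1; ring) (by
      refine Eq.trans ?_ hB; congr 1; funext t; congr 1; ring)
  exact ⟨a, b, c, d, p, q, r, hd, hr, h1, h2⟩

end SB

namespace SB
open Real Filter Topology MeasureTheory

lemma curve_of {ℓ : ℝ} (hℓ : 0 < ℓ) {γ : ℝ → ℝ × ℝ}
    (hsmooth : ContDiff ℝ (⊤ : ℕ∞) γ) (hper : ∀ t, γ (t + ℓ) = γ t) (hinj : InjOn γ (Ico 0 ℓ))
    (hcurv : ∀ t, 0 < om (deriv γ t) (deriv (deriv γ) t)) :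
    Curve ℓ (fun t => (γ t).1) (fun t => (γ t).2) (fun t => (deriv γ t).1) (fun t => (deriv γ t).2)
      (fun t => (deriv (deriv γ) t).1) (fun t => (deriv (deriv γ) t).2) := by
  have s0 : ContDiff ℝ (3 : ℕ) γ := contDiff_infty.1 hsmooth 3
  have s1 : ContDiff ℝ (2 : ℕ) (deriv γ) :=
    (contDiff_succ_iff_deriv (n := ((2 : ℕ) : WithTop ℕ∞)).1 (by exact_mod_cast s0)).2.2
  have s2 : ContDiff ℝ (1 : ℕ) (deriv (deriv γ)) :=
    (contDiff_succ_iff_deriv (n := ((1 : ℕ) : WithTop ℕ∞)).1 (by exact_mod_cast s1)).2.2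
  have d0 : ∀ t, HasDerivAt γ (deriv γ t) t := fun t =>
    (s0.differentiable (by norm_num) t).hasDerivAt
  have d1 : ∀ t, HasDerivAt (deriv γ) (deriv (deriv γ) t) t := fun t =>
    (s1.differentiable (by norm_num) t).hasDerivAt
  have d2 : Differentiable ℝ (deriv (deriv γ)) := s2.differentiable (by norm_num)
  refine ⟨hℓ, fun t => (d0 t).fst, fun t => (d0 t).snd, fun t => (d1 t).fst, fun t => (d1 t).snd,
    d2.fst, d2.snd, fun t => by rw [hper], fun t => by rw [hper], ?_, hcurv⟩
  rintro s τ h1 h2 ⟨e1, e2⟩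
  have e : γ (s + τ) = γ s := Prod.ext e1 e2
  -- reduce `s` to `[0,ℓ)`
  have hP : Function.Periodic γ ℓ := hper
  set k := ⌊s / ℓ⌋ with hk
  have hk1 : (k:ℝ) * ℓ ≤ s := by have := Int.floor_le (s / ℓ); rwa [le_div_iff₀ hℓ] at this
  have hk2 : s < (k + 1) * ℓ := by have := Int.lt_floor_add_one (s / ℓ); rwa [div_lt_iff₀ hℓ] at this
  have a1 : γ (s - k * ℓ) = γ s := hP.sub_int_mul_eq k
  by_cases hc : s - k * ℓ + τ < ℓ
  · have a2 : γ (s - k * ℓ + τ) = γ (s + τ) := by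
      rw [show s - k * ℓ + τ = s + τ - k * ℓ by ring]; exact hP.sub_int_mul_eq k
    have := hinj (x₁ := s - k * ℓ + τ) (x₂ := s - k * ℓ) ⟨by linarith, hc⟩ ⟨by linarith, by linarith⟩ (by rw [a1, a2, e])
    linarith
  · have a2 : γ (s - k * ℓ + τ - ℓ) = γ (s + τ) := by
      rw [show s - k * ℓ + τ - ℓ = s + τ - ((k + 1 : ℤ) : ℝ) * ℓ by push_cast; ring]; exact hP.sub_int_mul_eq (k + 1)
    have := hinj (x₁ := s - k * ℓ + τ - ℓ) (x₂ := s - k * ℓ) ⟨by linarith, by linarith⟩ ⟨by linarith, by linarith⟩ (by rw [a1, a2, e])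
    linarith

lemma nct_of {γ : ℝ → ℝ × ℝ}
    (hnoconj : ∀ t : ℤ → ℝ, IsConfiguration γ t →
      ∀ ξ : ℤ → ℝ, IsJacobiField γ t ξ → ξ ≠ 0 →
        ¬ ∃ M N : ℤ, M < N ∧ ξ M = 0 ∧ ξ N = 0) :
    NCt (fun t => (γ t).1) (fun t => (γ t).2) (fun t => (deriv γ t).1) (fun t => (deriv γ t).2)
      (fun t => (deriv (deriv γ) t).1) (fun t => (deriv (deriv γ) t).2) := by
  intro t h1 h2 ξ h3
  exact hnoconj t ⟨h1, h2⟩ ξ h3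

/-- an invertible affine map of the plane, in coordinates -/
noncomputable def aff (a b c d p q : ℝ) (hd : a * d - b * c ≠ 0) : (ℝ × ℝ) ≃ᵃ[ℝ] (ℝ × ℝ) :=
  (LinearEquiv.toAffineEquiv
    { toFun := fun u => (a * u.1 + b * u.2, c * u.1 + d * u.2)
      map_add' := by intro u v; ext <;> simp <;> ring
      map_smul' := by intro r u; ext <;> simp <;> ring
      invFun := fun u => ((d * u.1 - b * u.2) / (a * d - b * c), (a * u.2 - c * u.1) / (a * d - b * c))
      left_inv := by
        intro u
        ext
        · simp only; rw [div_eq_iff hd]; ring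
        · simp only; rw [div_eq_iff hd]; ring
      right_inv := by
        intro u
        ext
        · simp only; rw [mul_div_assoc', mul_div_assoc', ← add_div, div_eq_iff hd]; ring
        · simp only; rw [mul_div_assoc', mul_div_assoc', ← add_div, div_eq_iff hd]; ring }).trans
    (AffineEquiv.constVAdd ℝ (ℝ × ℝ) (p, q))

lemma aff_apply (a b c d p q : ℝ) (hd : a * d - b * c ≠ 0) (u : ℝ × ℝ) :
    aff a b c d p q hd u = (p + (a * u.1 + b * u.2), q + (c * u.1 + d * u.2)) := rfl

end SB

theorem symplectic_billiard_without_conjugate_points_is_ellipse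
    (ℓ : ℝ) (hℓ : 0 < ℓ) (γ : ℝ → ℝ × ℝ)
    (hsmooth : ContDiff ℝ (⊤ : ℕ∞) γ)
    (hper : ∀ t, γ (t + ℓ) = γ t)
    (hinj : InjOn γ (Ico 0 ℓ))
    (hcurv : ∀ t, 0 < om (deriv γ t) (deriv (deriv γ) t))
    (hnoconj : ∀ t : ℤ → ℝ, IsConfiguration γ t →
      ∀ ξ : ℤ → ℝ, IsJacobiField γ t ξ → ξ ≠ 0 →
        ¬ ∃ M N : ℤ, M < N ∧ ξ M = 0 ∧ ξ N = 0) :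
    ∃ f : (ℝ × ℝ) ≃ᵃ[ℝ] (ℝ × ℝ), range γ = f '' unitCircle := by
  obtain ⟨a, b, c, d, p, q, r, hd, hr, h1, h2⟩ :=
    (SB.curve_of hℓ hsmooth hper hinj hcurv).ellipse (SB.nct_of hnoconj)
  -- `γ = M⁻¹ ((p,q) + r u)`, with `M⁻¹ = !![d, -b; -c, a]`
  have hdet : (d * r) * (a * r) - (-b * r) * (-c * r) ≠ 0 := by
    have : (d * r) * (a * r) - (-b * r) * (-c * r) = r ^ 2 := by linear_combination r ^ 2 * hd
    rw [this]; positivity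
  refine ⟨SB.aff (d * r) (-b * r) (-c * r) (a * r) (d * p - b * q) (a * q - c * p) hdet, ?_⟩
  have solve : ∀ x y u v : ℝ, a * x + b * y = p + r * u → c * x + d * y = q + r * v →
      d * p - b * q + (d * r * u + -b * r * v) = x ∧ a * q - c * p + (-c * r * u + a * r * v) = y := by
    intro x y u v e1 e2
    constructor
    · linear_combination (-d) * e1 + b * e2 + x * hd
    · linear_combination c * e1 - a * e2 + y * hd
  ext z
  constructor
  · rintro ⟨t, rfl⟩
    obtain ⟨φ, e1, e2⟩ := h1 t
    refine ⟨(Real.sin φ, -Real.cos φ), ?_, ?_⟩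
    · simp only [unitCircle, mem_setOf_eq]
      linear_combination Real.sin_sq_add_cos_sq φ
    · rw [SB.aff_apply]
      obtain ⟨f1, f2⟩ := solve (γ t).1 (γ t).2 (Real.sin φ) (-Real.cos φ) e1 (by rw [e2]; ring)
      exact Prod.ext f1 f2
  · rintro ⟨⟨u, v⟩, huv, rfl⟩
    have huv' : u ^ 2 + v ^ 2 = 1 := huv
    -- `(u,v) = (sin φ, -cos φ)`
    obtain ⟨φ, hs, hc⟩ : ∃ φ : ℝ, Real.sin φ = u ∧ -Real.cos φ = v := by
      refine ⟨Complex.arg (⟨-v, u⟩ : ℂ), ?_, ?_⟩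
      · have hn : ‖(⟨-v, u⟩ : ℂ)‖ = 1 := by
          rw [Complex.norm_eq_sqrt_sq_add_sq]; simp; linarith
        rw [Complex.sin_arg, hn]; simp
      · have hn : ‖(⟨-v, u⟩ : ℂ)‖ = 1 := by
          rw [Complex.norm_eq_sqrt_sq_add_sq]; simp; linarith
        rw [Complex.cos_arg (by rw [← norm_pos_iff, hn]; norm_num), hn]; simp
    obtain ⟨t, e1, e2⟩ := h2 φ
    refine ⟨t, ?_⟩
    rw [SB.aff_apply]
    obtain ⟨f1, f2⟩ := solve (γ t).1 (γ t).2 u v (by rw [← hs]; exact e1) (by rw [← hc]; rw [e2]; ring)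
    exact (Prod.ext f1 f2).symm
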